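/- (Local mass near the blow-up point at the blow-up scale.) Under the blow-up setup, for every ε > 0 there exists k_ε > 0 and i_ε ∈ ℕ such that for all i ≥ i_ε, 8π(1 − ε) ≤ ∫_{B(x_i, k_ε e^{−u_i(x_i)/2})} V_i(y) e^{u_i(y)} dy ≤ 8π(1 + ε). -/

import Mathlib

open MeasureTheory Filter Metric

abbrev E2 := EuclideanSpace ℝ (Fin 2)

noncomputable def pd (j : Fin 2) (u : E2 → ℝ) (x : E2) : ℝ :=
  fderiv ℝ u x (EuclideanSpace.single j 1)

noncomputable def lapl (u : E2 → ℝ) (x : E2) : ℝ :=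
  pd 0 (pd 0 u) x + pd 1 (pd 1 u) x

/-! ### Basic calculus -/

noncomputable def n2 (x : E2) : ℝ := x 0 ^ 2 + x 1 ^ 2

lemma n2_eq (x : E2) : n2 x = ‖x‖ ^ 2 := by
  rw [EuclideanSpace.norm_sq_eq, Fin.sum_univ_two]
  simp [n2]

lemma n2_nonneg (x : E2) : 0 ≤ n2 x := by unfold n2; positivity

lemma n2_contDiff {n : WithTop ℕ∞} : ContDiff ℝ n n2 := by
  unfold n2; fun_prop

lemma n2_cont : Continuous n2 := n2_contDiff.continuous (n := 1)

noncomputable def mp (n : ℕ) (s : ℝ) : ℝ := (max 0 s) ^ n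

lemma mp_cont (n : ℕ) : Continuous (mp n) := by unfold mp; fun_prop

lemma hasDerivAt_mp (n : ℕ) (s : ℝ) : HasDerivAt (mp (n+2)) ((n+2) * mp (n+1) s) s := by
  rcases lt_trichotomy s 0 with h | h | h
  · have : (mp (n+2)) =ᶠ[nhds s] fun _ => 0 := by
      filter_upwards [Iio_mem_nhds h] with t ht
      have ht' : t < 0 := ht
      simp [mp, max_eq_left ht'.le]
    refine ((hasDerivAt_const s (0:ℝ)).congr_of_eventuallyEq this).congr_deriv ?_
    simp [mp, max_eq_left h.le]
  · subst h
    have h0 : (n+2 : ℝ) * mp (n+1) 0 = 0 := by simp [mp]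
    rw [h0, hasDerivAt_iff_isLittleO]
    simp only [sub_zero, smul_zero]
    have : mp (n+2) 0 = 0 := by simp [mp]
    simp only [this, sub_zero]
    have hO : (mp (n+2)) =O[nhds 0] fun x : ℝ => x ^ (n+2) := by
      refine Asymptotics.IsBigO.of_bound 1 (Eventually.of_forall fun x => ?_)
      simp only [mp, norm_pow, one_mul]
      gcongr
      rw [Real.norm_eq_abs, abs_of_nonneg (le_max_left _ _)]
      exact max_le (norm_nonneg _) (le_abs_self _)
    refine hO.trans_isLittleO ?_
    have := Asymptotics.isLittleO_pow_id (𝕜 := ℝ) (n := n+2) (by omega)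
    simpa using this
  · have : (mp (n+2)) =ᶠ[nhds s] fun t => t ^ (n+2) := by
      filter_upwards [Ioi_mem_nhds h] with t ht
      have ht' : 0 < t := ht
      simp [mp, max_eq_right ht'.le]
    refine ((hasDerivAt_pow (n+2) s).congr_of_eventuallyEq this).congr_deriv ?_
    simp [mp, max_eq_right h.le]

lemma contDiff_mp (n : ℕ) : ContDiff ℝ 1 (mp (n+2)) := by
  rw [contDiff_one_iff_deriv]
  refine ⟨fun s => (hasDerivAt_mp n s).differentiableAt, ?_⟩
  have : deriv (mp (n+2)) = fun s => ((n:ℝ)+2) * mp (n+1) s := by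
    ext s; exact (hasDerivAt_mp n s).deriv
  rw [this]
  exact continuous_const.mul (mp_cont _)

lemma pd_contDiff {n : WithTop ℕ∞} {g : E2 → ℝ} (hg : ContDiff ℝ (n+1) g) (j : Fin 2) :
    ContDiff ℝ n (pd j g) := by
  unfold pd
  exact (hg.fderiv_right le_rfl).clm_apply contDiff_const

lemma pd_cont {g : E2 → ℝ} (hg : ContDiff ℝ 1 g) (j : Fin 2) : Continuous (pd j g) := by
  have : ContDiff ℝ 0 (pd j g) := pd_contDiff (n := 0) (by simpa using hg) j
  exact this.continuous

lemma pd_contDiff1 {g : E2 → ℝ} (hg : ContDiff ℝ 2 g) (j : Fin 2) : ContDiff ℝ 1 (pd j g) :=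
  pd_contDiff (n := 1) (by simpa [one_add_one_eq_two] using hg) j

lemma pd_compact {g : E2 → ℝ} (hg : HasCompactSupport g) (j : Fin 2) :
    HasCompactSupport (pd j g) := by
  exact hg.fderiv_apply ℝ _

lemma lapl_cont {g : E2 → ℝ} (hg : ContDiff ℝ 2 g) : Continuous (lapl g) := by
  unfold lapl
  exact (pd_cont (pd_contDiff1 hg 0) 0).add (pd_cont (pd_contDiff1 hg 1) 1)

lemma lapl_compact {g : E2 → ℝ} (hg : HasCompactSupport g) : HasCompactSupport (lapl g) := by
  unfold lapl
  exact (pd_compact (pd_compact hg 0) 0).add (pd_compact (pd_compact hg 1) 1)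

lemma pd_mul {g h : E2 → ℝ} {x : E2} (hg : DifferentiableAt ℝ g x) (hh : DifferentiableAt ℝ h x)
    (j : Fin 2) : pd j (fun y => g y * h y) x = pd j g x * h x + g x * pd j h x := by
  unfold pd
  rw [fderiv_fun_mul hg hh]
  simp; ring

lemma pd_coord (j k : Fin 2) (x : E2) : pd k (fun y => y j) x = if j = k then 1 else 0 := by
  unfold pd
  have : (fun y : E2 => y j) = (EuclideanSpace.proj j : E2 →L[ℝ] ℝ) := by ext; simp
  rw [this, ContinuousLinearMap.fderiv]
  simp

lemma pd_comp {G : ℝ → ℝ} {h : E2 → ℝ} {x : E2} {G' : ℝ} (hG : HasDerivAt G G' (h x))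
    (hh : DifferentiableAt ℝ h x) (j : Fin 2) : pd j (fun y => G (h y)) x = G' * pd j h x := by
  unfold pd
  have := (hG.comp_hasFDerivAt x hh.hasFDerivAt).fderiv
  simp only [Function.comp_def] at this
  rw [this]; simp

lemma pd_n2 (j : Fin 2) (x : E2) : pd j n2 x = 2 * x j := by
  have h : n2 = fun x : E2 => x 0 * x 0 + x 1 * x 1 := by ext; simp [n2]; ring
  have d : ∀ k : Fin 2, DifferentiableAt ℝ (fun y : E2 => y k) x := fun k => by fun_prop
  have e : pd j (fun x : E2 => x 0 * x 0 + x 1 * x 1) x =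
      pd j (fun x : E2 => x 0 * x 0) x + pd j (fun x : E2 => x 1 * x 1) x := by
    unfold pd
    rw [fderiv_fun_add ((d 0).fun_mul (d 0)) ((d 1).fun_mul (d 1))]
    simp
  rw [h, e, pd_mul (d 0) (d 0), pd_mul (d 1) (d 1)]
  simp only [pd_coord]
  fin_cases j <;> simp <;> ring

lemma pd_radial {G : ℝ → ℝ} {x : E2} {G' : ℝ} (hG : HasDerivAt G G' (n2 x)) (j : Fin 2) :
    pd j (fun y => G (n2 y)) x = G' * (2 * x j) := by
  rw [pd_comp hG (n2_contDiff.differentiable (by norm_num : (1 : WithTop ℕ∞) ≠ 0) x), pd_n2]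

lemma pd_comm {g : E2 → ℝ} (hg : ContDiff ℝ 2 g) (j k : Fin 2) (x : E2) :
    pd j (pd k g) x = pd k (pd j g) x := by
  have hs := (hg.contDiffAt (x := x)).isSymmSndFDerivAt (by simp)
  have hd : DifferentiableAt ℝ (fderiv ℝ g) x :=
    (hg.fderiv_right (m := 1) (by norm_num [one_add_one_eq_two])).differentiable (by norm_num) x
  have key : ∀ a c : Fin 2, pd a (pd c g) x =
      fderiv ℝ (fderiv ℝ g) x (EuclideanSpace.single a 1) (EuclideanSpace.single c 1) := by
    intro a c
    unfold pd
    rw [fderiv_clm_apply hd (differentiableAt_const _)]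
    simp
  rw [key, key]
  exact hs _ _

lemma ibp {g h : E2 → ℝ} (hg : ContDiff ℝ 1 g) (hh : ContDiff ℝ 1 h) (hc : HasCompactSupport g)
    (j : Fin 2) : ∫ x, g x * pd j h x = - ∫ x, pd j g x * h x := by
  refine integral_mul_fderiv_eq_neg_fderiv_mul_of_integrable ?_ ?_ ?_
    (fun x _ => hg.differentiable (by norm_num) x) (fun x _ => hh.differentiable (by norm_num) x)
  · exact ((pd_cont hg j).mul hh.continuous).integrable_of_hasCompactSupport
      ((pd_compact hc j).mul_right)
  · exact (hg.continuous.mul (pd_cont hh j)).integrable_of_hasCompactSupport hc.mul_right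
  · exact (hg.continuous.mul hh.continuous).integrable_of_hasCompactSupport hc.mul_right

/-- the truncated paraboloid -/
noncomputable def qq (R : ℝ) (x : E2) : ℝ := max 0 (1 - n2 x / R ^ 2)

lemma qq_cont (R : ℝ) : Continuous (qq R) := by
  unfold qq
  exact continuous_const.max (continuous_const.sub (n2_cont.div_const _))

lemma qq_nonneg (R : ℝ) (x : E2) : 0 ≤ qq R x := le_max_left _ _

lemma qq_le_one (R : ℝ) (x : E2) : qq R x ≤ 1 := by
  refine max_le zero_le_one ?_
  have := div_nonneg (n2_nonneg x) (sq_nonneg R)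
  linarith

lemma qq_zero {R : ℝ} (hR : 0 < R) {x : E2} (hx : R ≤ ‖x‖) : qq R x = 0 := by
  refine max_eq_left ?_
  rw [n2_eq, sub_nonpos, one_le_div (by positivity)]
  gcongr

lemma qq_compact {R : ℝ} (hR : 0 < R) : HasCompactSupport (qq R) := by
  refine HasCompactSupport.intro (isCompact_closedBall (0:E2) R) fun x hx => ?_
  refine qq_zero hR ?_
  simp at hx; exact hx.le

lemma qq_pow_compact {R : ℝ} (hR : 0 < R) (n : ℕ) : HasCompactSupport (fun x => qq R x ^ (n+1)) := by
  refine HasCompactSupport.intro (isCompact_closedBall (0:E2) R) fun x hx => ?_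
  simp at hx
  simp [qq_zero hR hx.le]

lemma qq_pow_contDiff (R : ℝ) (n : ℕ) : ContDiff ℝ 1 (fun x => qq R x ^ (n+2)) := by
  have : (fun x => qq R x ^ (n+2)) = fun x => mp (n+2) (1 - n2 x / R ^ 2) := by
    ext; simp [mp, qq]
  rw [this]
  exact (contDiff_mp n).comp (contDiff_const.sub (n2_contDiff.div_const _))

lemma qq_pd (R : ℝ) (n : ℕ) (j : Fin 2) (x : E2) :
    pd j (fun x => qq R x ^ (n+2)) x = - ((n+2) * 2 / R ^ 2) * x j * qq R x ^ (n+1) := by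
  have : (fun x => qq R x ^ (n+2)) = fun x => (fun t => mp (n+2) (1 - t / R ^ 2)) (n2 x) := by
    ext; simp [mp, qq]
  rw [this]
  have h1 : HasDerivAt (fun t : ℝ => 1 - t / R ^ 2) (-(1 / R ^ 2)) (n2 x) := by
    simpa using ((hasDerivAt_id (n2 x)).div_const (R ^ 2)).const_sub 1
  have h2 := (hasDerivAt_mp n (1 - n2 x / R ^ 2)).comp (n2 x) h1
  rw [pd_radial (G := fun t => mp (n+2) (1 - t / R ^ 2)) h2]
  simp [mp, qq]; ring

lemma qq_scale {R : ℝ} (hR : 0 < R) (x : E2) : qq R (R • x) = qq 1 x := by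
  unfold qq
  congr 2
  simp [n2]; field_simp

lemma integral_qq_sq : ∫ x : E2, qq 1 x ^ 2 = Real.pi / 3 := by
  have h : (fun x : E2 => qq 1 x ^ 2) = fun x => (fun y : ℝ => (max 0 (1 - y ^ 2)) ^ 2) ‖x‖ := by
    ext x; simp [qq, n2_eq]
  rw [h, integral_fun_norm_addHaar volume (fun y : ℝ => (max 0 (1 - y ^ 2)) ^ 2)]
  have hv : volume.real (ball (0:E2) 1) = Real.pi := by
    simp [Measure.real, EuclideanSpace.volume_ball_fin_two, Real.pi_pos.le]
  have hi : ∫ y in Set.Ioi (0:ℝ), y * (max 0 (1 - y ^ 2)) ^ 2 = 1 / 6 := by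
    have : ∫ y in Set.Ioi (0:ℝ), y * (max 0 (1 - y ^ 2)) ^ 2 =
        ∫ y in Set.Ioc (0:ℝ) 1, y * (1 - y ^ 2) ^ 2 := by
      rw [← integral_indicator measurableSet_Ioi, ← integral_indicator measurableSet_Ioc]
      congr 1; ext y
      by_cases h0 : 0 < y
      · by_cases h1 : y ≤ 1
        · rw [Set.indicator_of_mem (show y ∈ Set.Ioi 0 from h0),
            Set.indicator_of_mem (show y ∈ Set.Ioc 0 1 from ⟨h0, h1⟩), max_eq_right (by nlinarith)]
        · rw [Set.indicator_of_mem (show y ∈ Set.Ioi 0 from h0),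
            Set.indicator_of_notMem (by simp [h1]), max_eq_left (by push Not at h1; nlinarith)]
          simp
      · rw [Set.indicator_of_notMem (by simpa using h0), Set.indicator_of_notMem (by simp [h0])]
    rw [this, ← intervalIntegral.integral_of_le zero_le_one]
    have h2 : ∀ y ∈ Set.uIcc (0:ℝ) 1,
        HasDerivAt (fun y : ℝ => - (1 - y ^ 2) ^ 3 / 6) (y * (1 - y ^ 2) ^ 2) y := by
      intro y _
      have h3 : HasDerivAt (fun y : ℝ => 1 - y ^ 2) (- (2 * y)) y := by
        simpa using (hasDerivAt_pow 2 y).const_sub 1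
      refine ((h3.pow 3).neg.div_const 6).congr_deriv ?_
      simp; ring
    rw [intervalIntegral.integral_eq_sub_of_hasDerivAt h2
      (Continuous.intervalIntegrable (by fun_prop) _ _)]
    norm_num
  have hf : Module.finrank ℝ E2 = 2 := by simp [E2]
  rw [hf, hv]
  simp only [Nat.add_one_sub_one, pow_one, smul_eq_mul, nsmul_eq_mul]
  rw [hi]; push_cast; ring

/-! ### Kernel identity -/

section kernel

variable {κ : ℝ → ℝ} {R : ℝ}

lemma K_contDiff (hκ : ContDiff ℝ 1 κ) (j : Fin 2) :
    ContDiff ℝ 1 (fun z : E2 => κ (n2 z) * z j) :=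
  (hκ.comp n2_contDiff).mul (by fun_prop)

lemma K_compact (h0 : ∀ t, R ^ 2 ≤ t → κ t = 0) (hR : 0 < R) (j : Fin 2) :
    HasCompactSupport (fun z : E2 => κ (n2 z) * z j) := by
  refine HasCompactSupport.intro (isCompact_closedBall (0:E2) R) fun x hx => ?_
  simp at hx
  rw [h0 _ (by rw [n2_eq]; gcongr), zero_mul]

lemma K_pd (hκ : ContDiff ℝ 1 κ) (j k : Fin 2) (z : E2) :
    pd k (fun z : E2 => κ (n2 z) * z j) z =
      deriv κ (n2 z) * (2 * z k) * z j + κ (n2 z) * (if j = k then 1 else 0) := by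
  have d := (hκ.differentiable (by norm_num) (n2 z)).hasDerivAt
  rw [pd_mul (g := fun z => κ (n2 z)) (h := fun z => z j)
    ((hκ.comp n2_contDiff).differentiable (by norm_num) z) (by fun_prop), pd_coord, pd_radial d]

lemma kernel_id (hκ : ContDiff ℝ 1 κ) (h0 : ∀ t, R ^ 2 ≤ t → κ t = 0) (hR : 0 < R)
    {g : E2 → ℝ} (hg : ContDiff ℝ 2 g) (j : Fin 2) :
    ∫ z, (κ (n2 z) * z j) * lapl g z =
      - ∫ z, (2 * κ (n2 z) + 2 * n2 z * deriv κ (n2 z)) * pd j g z := by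
  have hK := fun j => K_contDiff hκ j
  have hc := fun j => K_compact h0 hR j
  have i1 : ∀ (i k l : Fin 2),
      Integrable (fun z : E2 => (κ (n2 z) * z i) * pd k (pd l g) z) := fun i k l =>
    ((hK i).continuous.mul (pd_cont (pd_contDiff1 hg l) k)).integrable_of_hasCompactSupport
      ((hc i).mul_right)
  have i2 : ∀ (i k l : Fin 2),
      Integrable (fun z : E2 => pd k (fun z : E2 => κ (n2 z) * z i) z * pd l g z) := fun i k l =>
    ((pd_cont (hK i) k).mul (pd_contDiff1 hg l).continuous).integrable_of_hasCompactSupport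
      ((pd_compact (hc i) k).mul_right)
  have b : ∀ i k l : Fin 2, ∫ z, (κ (n2 z) * z i) * pd k (pd l g) z =
      - ∫ z, pd k (fun z : E2 => κ (n2 z) * z i) z * pd l g z :=
    fun i k l => ibp (hK i) (pd_contDiff1 hg l) (hc i) k
  have sw : ∀ i k : Fin 2, (fun z => pd k (fun z : E2 => κ (n2 z) * z i) z) =
      fun z => pd i (fun z : E2 => κ (n2 z) * z k) z := by
    intro i k; ext z
    rw [K_pd hκ, K_pd hκ]
    by_cases h : i = k
    · subst h; ring
    · rw [if_neg h, if_neg (Ne.symm h)]; ring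
  have step : ∀ k : Fin 2, ∫ z, (κ (n2 z) * z j) * pd k (pd k g) z =
      - ∫ z, pd k (fun z : E2 => κ (n2 z) * z k) z * pd j g z := by
    intro k
    rw [b j k k]
    have : (fun z => pd k (fun z : E2 => κ (n2 z) * z j) z * pd k g z) =
        fun z => pd j (fun z : E2 => κ (n2 z) * z k) z * pd k g z := by
      ext z; rw [congrFun (sw j k) z]
    rw [this, ← b k j k]
    have : (fun z => (κ (n2 z) * z k) * pd j (pd k g) z) =
        fun z => (κ (n2 z) * z k) * pd k (pd j g) z := by
      ext z; rw [pd_comm hg]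
    rw [this, b k k j]
  unfold lapl
  simp_rw [mul_add]
  rw [integral_add (i1 j 0 0) (i1 j 1 1), step 0, step 1, ← neg_add,
    ← integral_add (i2 0 0 j) (i2 1 1 j)]
  congr 2
  ext z
  rw [K_pd hκ, K_pd hκ]
  simp only [n2, if_true]
  ring

end kernel

noncomputable def kpoly (e R t : ℝ) : ℝ :=
  3 * ((e ^ 2)⁻¹ - (R ^ 2)⁻¹) + 3 * t * (((R ^ 2)⁻¹) ^ 2 - ((e ^ 2)⁻¹) ^ 2)
    - t ^ 2 * (((R ^ 2)⁻¹) ^ 3 - ((e ^ 2)⁻¹) ^ 3)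

noncomputable def kap (e R t : ℝ) : ℝ :=
  if t < e ^ 2 then kpoly e R t else mp 3 (1 - t / R ^ 2) / t

lemma kap_pos_eq {e R t : ℝ} (he : 0 < e) (hR : e < R) (ht : 0 < t) :
    kap e R t = (mp 3 (1 - t / R ^ 2) - mp 3 (1 - t / e ^ 2)) / t := by
  have hR0 : 0 < R := he.trans hR
  unfold kap
  split_ifs with h
  · have h1 : t / e ^ 2 < 1 := (div_lt_one (by positivity)).2 h
    have h2 : t / R ^ 2 < 1 := (div_lt_one (by positivity)).2 (h.trans (by gcongr))
    unfold mp
    rw [max_eq_right (by linarith), max_eq_right (by linarith), kpoly]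
    field_simp
    ring
  · have h1 : 1 ≤ t / e ^ 2 := (one_le_div (by positivity)).2 (not_lt.1 h)
    have : mp 3 (1 - t / e ^ 2) = 0 := by
      unfold mp; rw [max_eq_left (by linarith)]; norm_num
    rw [this, sub_zero]

lemma kap_mul {e R : ℝ} (he : 0 < e) (hR : e < R) (t : ℝ) :
    t * kap e R t = mp 3 (1 - t / R ^ 2) - mp 3 (1 - t / e ^ 2) := by
  have hR0 : 0 < R := he.trans hR
  rcases lt_or_ge 0 t with h | h
  · rw [kap_pos_eq he hR h]; field_simp
  · have h1 : t / e ^ 2 ≤ 0 := div_nonpos_of_nonpos_of_nonneg h (by positivity)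
    have h2 : t / R ^ 2 ≤ 0 := div_nonpos_of_nonpos_of_nonneg h (by positivity)
    unfold kap mp
    rw [if_pos (by nlinarith [sq_pos_of_pos he]), max_eq_right (by linarith),
      max_eq_right (by linarith), kpoly]
    field_simp
    ring

lemma kap_contDiff {e R : ℝ} (he : 0 < e) (hR : e < R) : ContDiff ℝ 1 (kap e R) := by
  rw [contDiff_iff_contDiffAt]
  intro t
  rcases lt_or_ge t (e ^ 2) with h | h
  · have : kap e R =ᶠ[nhds t] kpoly e R := by
      filter_upwards [Iio_mem_nhds h] with s hs
      exact if_pos hs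
    refine ContDiffAt.congr_of_eventuallyEq ?_ this
    unfold kpoly; fun_prop
  · have ht : 0 < t := lt_of_lt_of_le (by positivity) h
    have : kap e R =ᶠ[nhds t] fun t => (mp 3 (1 - t / R ^ 2) - mp 3 (1 - t / e ^ 2)) / t := by
      filter_upwards [Ioi_mem_nhds ht] with s hs
      exact kap_pos_eq he hR hs
    refine ContDiffAt.congr_of_eventuallyEq ?_ this
    refine ContDiffAt.div ?_ contDiffAt_id ht.ne'
    have h1 : ∀ a : ℝ, ContDiff ℝ 1 (fun t : ℝ => mp 3 (1 - t / a)) := fun a =>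
      (contDiff_mp 1).comp (by fun_prop)
    exact ((h1 _).sub (h1 _)).contDiffAt

lemma kap_zero {e R t : ℝ} (he : 0 < e) (hR : e < R) (ht : R ^ 2 ≤ t) : kap e R t = 0 := by
  have hR0 : 0 < R := he.trans hR
  have h1 : 1 ≤ t / R ^ 2 := (one_le_div (by positivity)).2 ht
  have h2 : ¬ t < e ^ 2 := not_lt.2 (le_trans (by gcongr) ht)
  unfold kap mp
  rw [if_neg h2, max_eq_left (by linarith)]; norm_num

lemma kap_nonneg {e R t : ℝ} (he : 0 < e) (hR : e < R) (ht : 0 ≤ t) : 0 ≤ kap e R t := by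
  have hR0 : 0 < R := he.trans hR
  rcases ht.eq_or_lt with h | h
  · subst h
    have : (R ^ 2)⁻¹ ≤ (e ^ 2)⁻¹ := by gcongr
    simp only [kap, kpoly]
    rw [if_pos (by positivity)]
    nlinarith
  · rw [kap_pos_eq he hR h]
    refine div_nonneg ?_ h.le
    rw [sub_nonneg]
    unfold mp
    gcongr

lemma kap_mul_le {e R t : ℝ} (he : 0 < e) (hR : e < R) (ht : 0 ≤ t) : t * kap e R t ≤ 1 := by
  have hR0 : 0 < R := he.trans hR
  rw [kap_mul he hR]
  have h1 : 0 ≤ mp 3 (1 - t / e ^ 2) := by unfold mp; positivity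
  have h2 : mp 3 (1 - t / R ^ 2) ≤ 1 := by
    unfold mp
    refine pow_le_one₀ (le_max_left _ _) (max_le zero_le_one ?_)
    have : 0 ≤ t / R ^ 2 := by positivity
    linarith
  linarith

lemma kap_div {e R : ℝ} (he : 0 < e) (hR : e < R) (t : ℝ) :
    2 * kap e R t + 2 * t * deriv (kap e R) t =
      6 / e ^ 2 * mp 2 (1 - t / e ^ 2) - 6 / R ^ 2 * mp 2 (1 - t / R ^ 2) := by
  have d := ((kap_contDiff he hR).differentiable (by norm_num) t).hasDerivAt
  have d1 := (hasDerivAt_id t).mul d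
  have m : ∀ a : ℝ, HasDerivAt (fun t : ℝ => mp 3 (1 - t / a))
      (3 * mp 2 (1 - t / a) * (-(1 / a))) t := by
    intro a
    have h1 : HasDerivAt (fun t : ℝ => 1 - t / a) (-(1 / a)) t := by
      simpa using ((hasDerivAt_id t).div_const a).const_sub 1
    refine ((hasDerivAt_mp 1 (1 - t / a)).comp t h1).congr_deriv ?_
    norm_num
  have d2 := (m (R ^ 2)).sub (m (e ^ 2))
  have e1 : (id * kap e R) = (fun t : ℝ => mp 3 (1 - t / R ^ 2)) - (fun t : ℝ => mp 3 (1 - t / e ^ 2)) := by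
    ext s; simpa using kap_mul he hR s
  rw [e1] at d1
  have := d1.unique d2
  simp only [id] at this
  linear_combination 2 * this

lemma qq_eq_mp (R : ℝ) (n : ℕ) (x : E2) : mp n (1 - n2 x / R ^ 2) = qq R x ^ n := rfl

lemma lapl_reflect {v : E2 → ℝ} (hv : ContDiff ℝ 2 v) (x : E2) :
    (∀ j z, pd j (fun z => v (x - z)) z = - pd j v (x - z)) ∧
    (∀ z, lapl (fun z => v (x - z)) z = lapl v (x - z)) := by
  have key : ∀ g : E2 → ℝ, ContDiff ℝ 1 g → ∀ j z,
      pd j (fun z => g (x - z)) z = - pd j g (x - z) := by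
    intro g hg j z
    unfold pd
    have h1 : HasFDerivAt (fun z : E2 => x - z) (-(ContinuousLinearMap.id ℝ E2)) z :=
      (hasFDerivAt_id z).const_sub x
    have h2 := ((hg.differentiable (by norm_num) (x - z)).hasFDerivAt.comp z h1).fderiv
    simp only [Function.comp_def] at h2
    rw [h2]; simp
  have k1 := key v (hv.of_le (by norm_num))
  refine ⟨k1, fun z => ?_⟩
  unfold lapl
  have : ∀ j, pd j (pd j fun z => v (x - z)) z = pd j (pd j v) (x - z) := by
    intro j
    have e : pd j (fun z => v (x - z)) = fun z => - pd j v (x - z) := by ext z; exact k1 j z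
    rw [e]
    have e2 : pd j (fun z => - pd j v (x - z)) z = - pd j (fun z => pd j v (x - z)) z := by
      unfold pd; rw [fderiv_fun_neg]; simp
    rw [e2, key _ (pd_contDiff1 hv j)]
    ring
  rw [this, this]

lemma repr_id {v : E2 → ℝ} (hv : ContDiff ℝ 2 v) {e R : ℝ} (he : 0 < e) (hR : e < R)
    (j : Fin 2) (x : E2) :
    6 * ∫ w, qq 1 w ^ 2 * pd j v (x - e • w) =
      (∫ y, (kap e R (n2 (x - y)) * (x - y) j) * lapl v y)
        - 24 / R ^ 4 * ∫ y, (x - y) j * qq R (x - y) * v y := by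
  have hR0 : 0 < R := he.trans hR
  obtain ⟨r1, r2⟩ := lapl_reflect hv x
  have hg : ContDiff ℝ 2 (fun z => v (x - z)) := hv.comp (by fun_prop)
  have hg1 : ContDiff ℝ 1 (fun z => v (x - z)) := hg.of_le (by norm_num)
  have k := kernel_id (kap_contDiff he hR) (fun t => kap_zero he hR) hR0 hg j
  simp_rw [kap_div he hR, qq_eq_mp, r2, sub_mul, mul_assoc] at k
  have ii : ∀ a : ℝ, 0 < a → Integrable (fun z : E2 => qq a z ^ 2 * pd j (fun z => v (x - z)) z) :=
    fun a ha => ((qq_pow_contDiff a 0).continuous.mul (pd_cont hg1 j)).integrable_of_hasCompactSupport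
      ((qq_pow_compact ha 1).mul_right)
  rw [integral_sub ((ii e he).const_mul _) ((ii R hR0).const_mul _), integral_const_mul,
    integral_const_mul] at k
  have b := ibp (qq_pow_contDiff R 0) hg1 (qq_pow_compact hR0 1) j
  simp only [zero_add, qq_pd, pow_one] at b
  have t1 : ∫ w, qq 1 w ^ 2 * pd j v (x - e • w) =
      (e ^ 2)⁻¹ * ∫ z, qq e z ^ 2 * pd j v (x - z) := by
    have := Measure.integral_comp_smul (volume : Measure E2)
      (fun z => qq e z ^ 2 * pd j v (x - z)) e
    simp only [qq_scale he] at this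
    rw [this]
    simp
  have t2 : ∫ z, qq e z ^ 2 * pd j (fun z => v (x - z)) z = - ∫ z, qq e z ^ 2 * pd j v (x - z) := by
    rw [← integral_neg]; congr 1; ext z; rw [r1]; ring
  have t3 : ∫ z, kap e R (n2 z) * (z j * lapl v (x - z)) =
      ∫ y, (kap e R (n2 (x - y)) * (x - y) j) * lapl v y := by
    rw [← integral_sub_left_eq_self _ volume x]
    congr 1; ext z; rw [sub_sub_cancel]; ring
  have t4 : ∫ z, -(((0:ℕ):ℝ) + 2) * 2 / R ^ 2 * z j * qq R z * v (x - z) =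
      -(4 / R ^ 2) * ∫ y, (x - y) j * qq R (x - y) * v y := by
    rw [← integral_sub_left_eq_self _ volume x, ← integral_const_mul]
    congr 1; ext z; rw [sub_sub_cancel]; push_cast; ring
  have t5 : ∫ z, -((((0:ℕ):ℝ) + 2) * 2 / R ^ 2) * z j * qq R z * v (x - z) =
      -(4 / R ^ 2) * ∫ y, (x - y) j * qq R (x - y) * v y := by
    rw [← t4]; congr 1; ext z; ring
  rw [t5] at b
  rw [t3, t2, b] at k
  rw [t1, k]
  field_simp
  ring

/-! ### The class of rescaled solutions, mean value estimates -/

structure Cls (b C k η : ℝ) (v : E2 → ℝ) : Prop where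
  smooth : ContDiff ℝ 2 v
  cpt : HasCompactSupport v
  zero : v 0 = 0
  nonpos : ∀ x ∈ ball (0:E2) k, v x ≤ 0
  f_nonneg : ∀ x ∈ ball (0:E2) k, 0 ≤ - lapl v x
  f_le : ∀ x ∈ ball (0:E2) k, - lapl v x ≤ b * Real.exp (v x)
  osc : ∃ w : ℝ, ∀ x ∈ ball (0:E2) k, |- lapl v x - w * Real.exp (v x)| ≤ η * Real.exp (v x)
  mass : ∫ x in ball (0:E2) k, Real.exp (v x) ≤ C

noncomputable def Ms (v : E2 → ℝ) (k : ℝ) : ℝ := ∫ x in ball (0:E2) k, - lapl v x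

lemma cont_intOn {g : E2 → ℝ} (hg : Continuous g) (k : ℝ) : IntegrableOn g (ball (0:E2) k) :=
  (hg.continuousOn.integrableOn_compact (isCompact_closedBall (0:E2) k)).mono_set
    ball_subset_closedBall

lemma Cls.mono {b C k k' η η' : ℝ} {v : E2 → ℝ} (h : Cls b C k η v) (hk : k' ≤ k) (hη : η ≤ η') :
    Cls b C k' η' v := by
  have s : ball (0:E2) k' ⊆ ball 0 k := ball_subset_ball hk
  refine ⟨h.smooth, h.cpt, h.zero, fun x hx => h.nonpos x (s hx), fun x hx => h.f_nonneg x (s hx),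
    fun x hx => h.f_le x (s hx), ?_, ?_⟩
  · obtain ⟨w, hw⟩ := h.osc
    exact ⟨w, fun x hx => (hw x (s hx)).trans (by gcongr)⟩
  · refine le_trans ?_ h.mass
    refine setIntegral_mono_set (cont_intOn (Real.continuous_exp.comp h.smooth.continuous) k) ?_
      s.eventuallyLE
    exact Eventually.of_forall fun x => (Real.exp_pos _).le

lemma Ms_mono {b C k k' η : ℝ} {v : E2 → ℝ} (h : Cls b C k η v) (hk : k' ≤ k) :
    Ms v k' ≤ Ms v k := by
  refine setIntegral_mono_set (cont_intOn (lapl_cont h.smooth).neg k) ?_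
    (ball_subset_ball hk).eventuallyLE
  filter_upwards [ae_restrict_mem measurableSet_ball] with x hx
  exact h.f_nonneg x hx

lemma Ms_nonneg {b C k η : ℝ} {v : E2 → ℝ} (h : Cls b C k η v) : 0 ≤ Ms v k :=
  setIntegral_nonneg measurableSet_ball h.f_nonneg

lemma Ms_le {b C k η : ℝ} {v : E2 → ℝ} (h : Cls b C k η v) (hb : 0 ≤ b) : Ms v k ≤ b * C := by
  have h1 : Ms v k ≤ ∫ x in ball (0:E2) k, b * Real.exp (v x) :=
    setIntegral_mono_on (cont_intOn (lapl_cont h.smooth).neg k)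
      (cont_intOn (continuous_const.mul (Real.continuous_exp.comp h.smooth.continuous)) k)
      measurableSet_ball h.f_le
  rw [integral_const_mul] at h1
  exact h1.trans (mul_le_mul_of_nonneg_left h.mass hb)

lemma qq_pow_int_eq {R : ℝ} (hR : 0 < R) (n : ℕ) (g : E2 → ℝ) :
    ∫ x, qq R x ^ (n+1) * g x = ∫ x in ball (0:E2) R, qq R x ^ (n+1) * g x := by
  symm
  refine setIntegral_eq_integral_of_forall_compl_eq_zero fun x hx => ?_
  simp at hx
  simp [qq_zero hR hx]

lemma qq_pow_int_le {R : ℝ} (hR : 0 < R) (n : ℕ) {g : E2 → ℝ} (hg : Continuous g)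
    (h : ∀ x ∈ ball (0:E2) R, 0 ≤ g x) :
    ∫ x, qq R x ^ (n+1) * g x ≤ ∫ x in ball (0:E2) R, g x := by
  rw [qq_pow_int_eq hR]
  refine setIntegral_mono_on (cont_intOn (((qq_cont R).pow _).mul hg) R) (cont_intOn hg R)
    measurableSet_ball fun x hx => ?_
  have := pow_le_one₀ (n := n+1) (qq_nonneg R x) (qq_le_one R x)
  nlinarith [h x hx]

lemma qq_int_scale {R : ℝ} (hR : 0 < R) (n : ℕ) (g : E2 → ℝ) :
    ∫ w, qq 1 w ^ n * g (R • w) = (R ^ 2)⁻¹ * ∫ x, qq R x ^ n * g x := by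
  have := Measure.integral_comp_smul (volume : Measure E2) (fun z => qq R z ^ n * g z) R
  simp only [qq_scale hR] at this
  rw [this]
  simp

lemma pd_scale {g : E2 → ℝ} {x₀ : E2} {l : ℝ} {w : E2} (hg : DifferentiableAt ℝ g (x₀ + l • w))
    (j : Fin 2) : pd j (fun w => g (x₀ + l • w)) w = l * pd j g (x₀ + l • w) := by
  unfold pd
  have h1 : HasFDerivAt (fun z : E2 => x₀ + l • z) (l • (ContinuousLinearMap.id ℝ E2)) w :=
    ((hasFDerivAt_id w).const_smul l).const_add x₀
  have h2 := (hg.hasFDerivAt.comp w h1).fderiv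
  simp only [Function.comp_def] at h2
  rw [h2]; simp

noncomputable def FF (v : E2 → ℝ) (l : ℝ) : ℝ := ∫ w, qq 1 w ^ 2 * v (l • w)

lemma coord_le (x : E2) (j : Fin 2) : |x j| ≤ ‖x‖ := by
  simpa using PiLp.norm_apply_le x j

lemma FF_deriv {v : E2 → ℝ} (hv : ContDiff ℝ 2 v) (hc : HasCompactSupport v) (l : ℝ) :
    HasDerivAt (FF v) (l / 6 * ∫ w, qq 1 w ^ 3 * lapl v (l • w)) l := by
  have hv1 : ContDiff ℝ 1 v := hv.of_le (by norm_num)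
  have bd : ∀ j, ∃ B, ∀ x, ‖pd j v x‖ ≤ B := fun j =>
    (pd_cont hv1 j).bounded_above_of_compact_support (pd_compact hc j)
  obtain ⟨B0, hB0⟩ := bd 0
  obtain ⟨B1, hB1⟩ := bd 1
  have ic : ∀ g : E2 → ℝ, Continuous g → Integrable (fun w => qq 1 w ^ 2 * g w) := fun g hg =>
    (((qq_cont 1).pow 2).mul hg).integrable_of_hasCompactSupport
      ((qq_pow_compact one_pos 1).mul_right)
  have cl : ∀ l : ℝ, Continuous fun w : E2 => l • w := fun l => by fun_prop
  have main := (hasDerivAt_integral_of_dominated_loc_of_deriv_le (μ := (volume : Measure E2))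
    (F := fun (l : ℝ) w => qq 1 w ^ 2 * v (l • w))
    (F' := fun (l : ℝ) w => qq 1 w ^ 2 * (w 0 * pd 0 v (l • w) + w 1 * pd 1 v (l • w)))
    (x₀ := l) (s := Set.univ) (bound := fun w => qq 1 w ^ 2 * (B0 + B1)) univ_mem
    (Eventually.of_forall fun l => (ic _ (hv1.continuous.comp (cl l))).aestronglyMeasurable)
    (ic _ (hv1.continuous.comp (cl l)))
    ?_ ?_ (ic _ continuous_const) ?_).2
  · refine main.congr_deriv ?_
    have h6 : ∀ j : Fin 2, ∫ w : E2, qq 1 w ^ 2 * (w j * pd j v (l • w)) =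
        l / 6 * ∫ w, qq 1 w ^ 3 * pd j (pd j v) (l • w) := by
      intro j
      have hh : ContDiff ℝ 1 (fun w => pd j v (0 + l • w)) := (pd_contDiff1 hv j).comp (by fun_prop)
      have i := ibp (qq_pow_contDiff 1 1) hh (qq_pow_compact one_pos 2) j
      simp only [qq_pd] at i
      have e1 : ∫ w : E2, qq 1 w ^ (1+2) * pd j (fun w => pd j v (0 + l • w)) w =
          l * ∫ w, qq 1 w ^ 3 * pd j (pd j v) (l • w) := by
        rw [← integral_const_mul]; congr 1; ext w
        rw [pd_scale ((pd_contDiff1 hv j).differentiable (by norm_num) _)]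
        simp; ring
      have e2 : ∫ w : E2, -(((1:ℕ) + 2 : ℝ) * 2 / 1 ^ 2) * w j * qq 1 w ^ (1+1) *
          pd j v (0 + l • w) = - 6 * ∫ w : E2, qq 1 w ^ 2 * (w j * pd j v (l • w)) := by
        rw [← integral_const_mul]; congr 1; ext w
        simp; ring
      rw [e1, e2] at i
      linarith
    have cj : ∀ j, Continuous fun w : E2 => w j * pd j v (l • w) := fun j =>
      (by fun_prop : Continuous fun w : E2 => w j).mul ((pd_cont hv1 j).comp (cl l))
    have cj2 : ∀ j, Integrable fun w : E2 => qq 1 w ^ 3 * pd j (pd j v) (l • w) := fun j =>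
      (((qq_cont 1).pow 3).mul ((pd_cont (pd_contDiff1 hv j) j).comp
        (cl l))).integrable_of_hasCompactSupport ((qq_pow_compact one_pos 2).mul_right)
    simp_rw [mul_add]
    rw [integral_add (ic _ (cj 0)) (ic _ (cj 1)), h6, h6, ← mul_add, ← integral_add (cj2 0) (cj2 1)]
    unfold lapl
    simp_rw [mul_add]
  · refine Continuous.aestronglyMeasurable ?_
    refine ((qq_cont 1).pow 2).mul (Continuous.add ?_ ?_)
    · exact (by fun_prop : Continuous fun w : E2 => w 0).mul ((pd_cont hv1 0).comp (cl l))
    · exact (by fun_prop : Continuous fun w : E2 => w 1).mul ((pd_cont hv1 1).comp (cl l))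
  · refine Eventually.of_forall fun w l _ => ?_
    rw [norm_mul, Real.norm_of_nonneg (sq_nonneg _)]
    rcases lt_or_ge ‖w‖ 1 with h | h
    · refine mul_le_mul_of_nonneg_left ?_ (sq_nonneg _)
      refine (norm_add_le _ _).trans (add_le_add ?_ ?_)
      · rw [norm_mul]
        have := coord_le w 0
        exact (mul_le_of_le_one_left (norm_nonneg _) (this.trans h.le)).trans (hB0 _)
      · rw [norm_mul]
        have := coord_le w 1
        exact (mul_le_of_le_one_left (norm_nonneg _) (this.trans h.le)).trans (hB1 _)
    · simp [qq_zero one_pos h]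
  · refine Eventually.of_forall fun w l _ => ?_
    have h1 : HasDerivAt (fun l : ℝ => l • w) w l := by
      simpa using (hasDerivAt_id l).smul_const w
    have h2 := (hv1.differentiable (by norm_num) (l • w)).hasFDerivAt.comp_hasDerivAt l h1
    refine (h2.const_mul (qq 1 w ^ 2)).congr_deriv ?_
    congr 1
    unfold pd
    have : w = w 0 • (EuclideanSpace.single 0 1 : E2) + w 1 • (EuclideanSpace.single 1 1 : E2) := by
      ext i; fin_cases i <;> simp
    conv_lhs => rw [this]
    rw [map_add, map_smul, map_smul]
    simp [← this]

lemma FF_zero {v : E2 → ℝ} (h : v 0 = 0) : FF v 0 = 0 := by simp [FF, h]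

lemma FF_lower {b C k η : ℝ} {v : E2 → ℝ} (h : Cls b C k η v) (hb : 0 ≤ b) (hk : 1 ≤ k) :
    - b - Ms v k / 6 * Real.log k ≤ FF v k := by
  have hd := FF_deriv h.smooth h.cpt
  have hF : Differentiable ℝ (FF v) := fun l => (hd l).differentiableAt
  have lc := lapl_cont h.smooth
  -- first range
  have h1 : - b ≤ FF v 1 := by
    have hm : MonotoneOn (fun l => FF v l + b * l) (Set.Icc 0 1) := by
      have hdd : ∀ l, HasDerivAt (fun l => FF v l + b * l)
          (l / 6 * (∫ w, qq 1 w ^ 3 * lapl v (l • w)) + b) l := fun l => by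
        exact ((hd l).add ((hasDerivAt_id l).const_mul b)).congr_deriv (by simp)
      refine monotoneOn_of_deriv_nonneg (convex_Icc 0 1)
        (fun l _ => (hdd l).continuousAt.continuousWithinAt)
        (fun l _ => (hdd l).differentiableAt.differentiableWithinAt) fun l hl => ?_
      rw [(hdd l).deriv]
      rw [interior_Icc] at hl
      have e1 : ∫ w, qq 1 w ^ 3 * (- lapl v (l • w)) ≤ ∫ w, qq 1 w ^ 2 * b := by
        refine integral_mono ?_ ?_ ?_
        · exact (((qq_cont 1).pow 3).mul (lc.comp (by fun_prop)).neg).integrable_of_hasCompactSupport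
            ((qq_pow_compact one_pos 2).mul_right)
        · exact (((qq_cont 1).pow 2).mul continuous_const).integrable_of_hasCompactSupport
            ((qq_pow_compact one_pos 1).mul_right)
        · intro w
          dsimp only
          rcases lt_or_ge ‖w‖ 1 with hw | hw
          · have hin : l • w ∈ ball (0:E2) k := by
              simp only [mem_ball_zero_iff, norm_smul, Real.norm_eq_abs, abs_of_pos hl.1]
              nlinarith [hl.1, hl.2, norm_nonneg w]
            have a1 := h.f_le _ hin
            have a2 := h.f_nonneg _ hin
            have a3 : - lapl v (l • w) ≤ b := by
              refine a1.trans (mul_le_of_le_one_right hb ?_)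
              exact Real.exp_le_one_iff.2 (h.nonpos _ hin)
            have a4 := qq_nonneg 1 w
            have a5 := qq_le_one 1 w
            have a6 : qq 1 w ^ 3 ≤ qq 1 w ^ 2 := pow_le_pow_of_le_one a4 a5 (by norm_num)
            exact mul_le_mul a6 a3 a2 (by positivity)
          · simp [qq_zero one_pos hw]
      rw [integral_mul_const, integral_qq_sq] at e1
      have e2 : ∫ w, qq 1 w ^ 3 * (- lapl v (l • w)) = - ∫ w, qq 1 w ^ 3 * lapl v (l • w) := by
        rw [← integral_neg]; congr 1; ext; ring
      rw [e2] at e1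
      have := Real.pi_le_four
      have e3 : - ∫ w, qq 1 w ^ 3 * lapl v (l • w) ≤ 2 * b := by nlinarith
      nlinarith [hl.1, hl.2]
    have := hm (by simp) (by simp) zero_le_one
    simp only [FF_zero h.zero] at this
    linarith
  have h2 : MonotoneOn (fun l => FF v l + Ms v k / 6 * Real.log l) (Set.Icc 1 k) := by
    have hdd : ∀ l, 0 < l → HasDerivAt (fun l => FF v l + Ms v k / 6 * Real.log l)
        (l / 6 * (∫ w, qq 1 w ^ 3 * lapl v (l • w)) + Ms v k / 6 * l⁻¹) l := fun l hl =>
      (hd l).add ((Real.hasDerivAt_log hl.ne').const_mul _)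
    refine monotoneOn_of_deriv_nonneg (convex_Icc 1 k)
      (fun l hl => (hdd l (by linarith [hl.1])).continuousAt.continuousWithinAt)
      (fun l hl => ?_) fun l hl => ?_
    · rw [interior_Icc] at hl
      exact (hdd l (by linarith [hl.1])).differentiableAt.differentiableWithinAt
    · rw [interior_Icc] at hl
      have hl0 : 0 < l := by linarith [hl.1]
      rw [(hdd l hl0).deriv, qq_int_scale hl0]
      have e1 := qq_pow_int_le (g := fun x => - lapl v x) hl0 2 lc.neg
        (fun x hx => h.f_nonneg x (ball_subset_ball hl.2.le hx))
      have e2 := Ms_mono h hl.2.le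
      have e3 : ∫ x, qq l x ^ (2+1) * (- lapl v x) = - ∫ x, qq l x ^ 3 * lapl v x := by
        rw [← integral_neg]; congr 1; ext; ring
      rw [e3] at e1
      unfold Ms at e2
      have : l / 6 * ((l ^ 2)⁻¹ * ∫ x, qq l x ^ 3 * lapl v x) + Ms v k / 6 * l⁻¹ =
        l⁻¹ / 6 * ((∫ x, qq l x ^ 3 * lapl v x) + Ms v k) := by field_simp
      rw [this]
      have : 0 ≤ l⁻¹ / 6 := by positivity
      refine mul_nonneg this ?_
      unfold Ms
      linarith
  have h3 := h2 (by simp [hk]) (by simp [hk]) hk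
  simp only [Real.log_one, mul_zero, add_zero] at h3
  linarith

lemma neg_int {b C k η : ℝ} {v : E2 → ℝ} (h : Cls b C k η v) (hb : 0 ≤ b) (hk : 1 ≤ k) :
    ∫ x in ball (0:E2) (k/2), - v x ≤ 2 * k ^ 2 * (b + Ms v k / 6 * Real.log k) := by
  have hk0 : 0 < k := by linarith
  have h1 := FF_lower h hb hk
  unfold FF at h1
  rw [qq_int_scale hk0] at h1
  have e : ∫ x, qq k x ^ (1+1) * (- v x) = - ∫ x, qq k x ^ 2 * v x := by
    rw [← integral_neg]; congr 1; ext; ring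
  have hvc := h.smooth.continuous
  have h2 : ∫ x in ball (0:E2) (k/2), 1 / 2 * (- v x) ≤ ∫ x, qq k x ^ (1+1) * (- v x) := by
    rw [qq_pow_int_eq hk0]
    have hc := cont_intOn (((qq_cont k).pow (1+1)).mul hvc.neg) k
    have sub : ball (0:E2) (k/2) ⊆ ball 0 k := ball_subset_ball (by linarith)
    refine le_trans ?_ (setIntegral_mono_set hc ?_ sub.eventuallyLE)
    · refine setIntegral_mono_on (cont_intOn (continuous_const.mul hvc.neg) _)
        (hc.mono_set sub) measurableSet_ball fun x hx => ?_
      have hv := h.nonpos x (sub hx)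
      have hq : 3 / 4 ≤ qq k x := by
        refine le_trans ?_ (le_max_right _ _)
        simp at hx
        have : n2 x / k ^ 2 ≤ 1 / 4 := by
          rw [div_le_iff₀ (by positivity), n2_eq]
          nlinarith [norm_nonneg x]
        linarith
      refine mul_le_mul_of_nonneg_right ?_ (by linarith)
      nlinarith
    · filter_upwards [ae_restrict_mem measurableSet_ball] with x hx
      exact mul_nonneg (pow_nonneg (qq_nonneg _ _) _) (by linarith [h.nonpos x hx])
  rw [integral_const_mul, e] at h2
  have h3 : - ∫ x, qq k x ^ 2 * v x ≤ k ^ 2 * (b + Ms v k / 6 * Real.log k) := by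
    have : ∫ x, qq k x ^ 2 * v x = k ^ 2 * ((k ^ 2)⁻¹ * ∫ x, qq k x ^ 2 * v x) := by field_simp
    rw [this]
    nlinarith [sq_pos_of_pos hk0]
  linarith

lemma mass_lower {b C k η : ℝ} {v : E2 → ℝ} (h : Cls b C k η v) (hb : 0 ≤ b) (hk : 1 ≤ k)
    (hk2 : C * Real.exp b < k) : Real.pi ≤ Ms v k := by
  by_contra hlt
  push Not at hlt
  have hk0 : 0 < k := by linarith
  have h1 := FF_lower h hb hk
  have hp := Real.pi_gt_three
  have hlog := Real.log_nonneg hk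
  set a : ℝ := 3 / Real.pi * FF v k with ha
  have ha1 : - b - Real.log k ≤ a := by
    have e1 : Ms v k / 6 * Real.log k ≤ Real.pi / 6 * Real.log k := by gcongr
    have e2 : - b - Real.pi / 6 * Real.log k ≤ FF v k := by linarith
    have e3 : 3 / Real.pi * (- b - Real.pi / 6 * Real.log k) ≤ a := by
      rw [ha]; gcongr
    have e4 : 3 / Real.pi * (- b - Real.pi / 6 * Real.log k) =
      - (3 / Real.pi) * b - 1 / 2 * Real.log k := by field_simp; ring
    have e5 : 3 / Real.pi ≤ 1 := by rw [div_le_one (by positivity)]; exact hp.le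
    rw [e4] at e3
    nlinarith
  have hvc : Continuous fun w : E2 => v (k • w) := h.smooth.continuous.comp (by fun_prop)
  have ic : ∀ g : E2 → ℝ, Continuous g → Integrable (fun w => qq 1 w ^ 2 * g w) := fun g hg =>
    (((qq_cont 1).pow 2).mul hg).integrable_of_hasCompactSupport
      ((qq_pow_compact one_pos 1).mul_right)
  have h2 : ∫ w, (Real.exp a * (1 - a)) * qq 1 w ^ 2 + Real.exp a * (qq 1 w ^ 2 * v (k • w)) ≤
      ∫ w, qq 1 w ^ 2 * Real.exp (v (k • w)) := by
    refine integral_mono ?_ (ic _ (Real.continuous_exp.comp hvc)) fun w => ?_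
    · refine Integrable.add ?_ ((ic _ hvc).const_mul _)
      simpa using (ic (fun _ => 1) continuous_const).const_mul _
    · have e1 := Real.add_one_le_exp (v (k • w) - a)
      have e2 : Real.exp (v (k • w)) = Real.exp a * Real.exp (v (k • w) - a) := by
        rw [← Real.exp_add]; congr 1; ring
      have e3 : Real.exp a * (v (k • w) - a + 1) ≤ Real.exp (v (k • w)) := by
        rw [e2]; gcongr
      nlinarith [mul_le_mul_of_nonneg_left e3 (sq_nonneg (qq 1 w))]
  rw [integral_add, integral_const_mul, integral_const_mul, integral_qq_sq] at h2
  rotate_left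
  · simpa using (ic (fun _ => 1) continuous_const).const_mul _
  · exact (ic _ hvc).const_mul _
  have e1 : ∫ w, qq 1 w ^ 2 * v (k • w) = Real.pi / 3 * a := by
    rw [ha]; change FF v k = _; field_simp
  rw [e1, qq_int_scale hk0 2 (fun x => Real.exp (v x))] at h2
  have h3 := qq_pow_int_le hk0 1 (Real.continuous_exp.comp h.smooth.continuous)
    (fun x _ => (Real.exp_pos _).le)
  have h4 : ∫ x, qq k x ^ 2 * Real.exp (v x) ≤ C := h3.trans h.mass
  have h5 : Real.exp a ≤ (k ^ 2)⁻¹ * C := by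
    have : Real.exp a * (1 - a) * (Real.pi / 3) + Real.exp a * (Real.pi / 3 * a) =
      Real.pi / 3 * Real.exp a := by ring
    rw [this] at h2
    have e6 : (k ^ 2)⁻¹ * ∫ x, qq k x ^ 2 * Real.exp (v x) ≤ (k ^ 2)⁻¹ * C := by gcongr
    nlinarith [Real.exp_pos a]
  have h6 : Real.exp (-b) * k⁻¹ ≤ (k ^ 2)⁻¹ * C := by
    refine le_trans ?_ h5
    have : Real.exp (-b) * k⁻¹ = Real.exp (- b - Real.log k) := by
      rw [Real.exp_sub, Real.exp_log hk0]; rfl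
    rw [this]; exact Real.exp_le_exp.2 ha1
  have h7 : k ≤ C * Real.exp b := by
    have e1 : k = (k ^ 2 * Real.exp b) * (Real.exp (-b) * k⁻¹) := by
      rw [Real.exp_neg]; field_simp
    have e2 : C * Real.exp b = (k ^ 2 * Real.exp b) * ((k ^ 2)⁻¹ * C) := by field_simp
    rw [e2, e1]
    conv_rhs => rw [← e1]
    have : 0 ≤ k ^ 2 * Real.exp b := by positivity
    rw [← e1]
    calc k = (k ^ 2 * Real.exp b) * (Real.exp (-b) * k⁻¹) := e1
      _ ≤ _ := by gcongr
  linarith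

/-! ### Pohozaev identity, lower side -/

lemma pd_exp {v : E2 → ℝ} (hv : ContDiff ℝ 1 v) (j : Fin 2) (x : E2) :
    pd j (fun y => Real.exp (v y)) x = Real.exp (v x) * pd j v x :=
  pd_comp (Real.hasDerivAt_exp (v x)) (hv.differentiable (by norm_num) x) j

lemma cc_int {R : ℝ} (hR : 0 < R) (n : ℕ) {g : E2 → ℝ} (hg : Continuous g) :
    Integrable (fun x => qq R x ^ (n+1) * g x) :=
  (((qq_cont R).pow (n+1)).mul hg).integrable_of_hasCompactSupport
    ((qq_pow_compact hR n).mul_right)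

lemma coord_cont (j : Fin 2) : Continuous fun x : E2 => x j := by fun_prop

lemma poho_exp {v : E2 → ℝ} (hv : ContDiff ℝ 1 v) {σ : ℝ} (hσ : 0 < σ) (n : ℕ) :
    ∫ x, qq σ x ^ (n+2) * (Real.exp (v x) * (x 0 * pd 0 v x + x 1 * pd 1 v x)) =
      - ∫ x, Real.exp (v x) *
        (2 * qq σ x ^ (n+2) - 2 * (n+2) * (n2 x / σ ^ 2) * qq σ x ^ (n+1)) := by
  have he : ContDiff ℝ 1 fun x => Real.exp (v x) := hv.exp
  have b : ∀ j : Fin 2, ∫ x, qq σ x ^ (n+2) * (Real.exp (v x) * (x j * pd j v x)) =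
      - ∫ x, Real.exp (v x) *
        (qq σ x ^ (n+2) - 2 * (n+2) * (x j ^ 2 / σ ^ 2) * qq σ x ^ (n+1)) := by
    intro j
    have hg : ContDiff ℝ 1 fun x : E2 => qq σ x ^ (n+2) * x j :=
      (qq_pow_contDiff σ n).mul (by fun_prop)
    have := ibp hg he ((qq_pow_compact hσ (n+1)).mul_right) j
    have e1 : ∫ x, qq σ x ^ (n+2) * (Real.exp (v x) * (x j * pd j v x)) =
        ∫ x, qq σ x ^ (n+2) * x j * pd j (fun x => Real.exp (v x)) x := by
      congr 1; ext x; rw [pd_exp hv]; ring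
    rw [e1, this]
    congr 2; ext x
    rw [pd_mul ((qq_pow_contDiff σ n).differentiable (by norm_num) x) (by fun_prop), qq_pd, pd_coord]
    simp only [if_true]; ring
  have hc := fun j : Fin 2 => (he.continuous.mul ((coord_cont j).mul (pd_cont hv j)))
  have i1 : ∀ j : Fin 2, Integrable fun x =>
      qq σ x ^ (n+2) * (Real.exp (v x) * (x j * pd j v x)) := fun j => cc_int hσ (n+1) (hc j)
  have i2 : ∀ j : Fin 2, Integrable fun x => Real.exp (v x) *
        (qq σ x ^ (n+2) - 2 * (n+2) * (x j ^ 2 / σ ^ 2) * qq σ x ^ (n+1)) := by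
    intro j
    have hcj := coord_cont j
    have a1 := cc_int hσ (n+1) he.continuous
    have a2 := cc_int hσ n (g := fun x => Real.exp (v x) * (2 * (n+2) * (x j ^ 2 / σ ^ 2)))
      (he.continuous.mul (continuous_const.mul ((hcj.pow 2).div_const _)))
    refine (a1.sub a2).congr (Eventually.of_forall fun x => ?_)
    simp only [Pi.sub_apply]; ring
  have e0 : ∫ x, qq σ x ^ (n+2) * (Real.exp (v x) * (x 0 * pd 0 v x + x 1 * pd 1 v x)) =
      ∫ x, (qq σ x ^ (n+2) * (Real.exp (v x) * (x 0 * pd 0 v x)) +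
        qq σ x ^ (n+2) * (Real.exp (v x) * (x 1 * pd 1 v x))) := by
    congr 1; ext x; ring
  rw [e0, integral_add (i1 0) (i1 1), b 0, b 1, ← neg_add, ← integral_add (i2 0) (i2 1)]
  congr 2; ext x; unfold n2; ring

lemma tau_le {σ : ℝ} (hσ : 0 < σ) {x : E2} (hx : ‖x‖ < σ) : n2 x / σ ^ 2 ≤ 1 := by
  rw [div_le_one (by positivity), n2_eq]; gcongr

lemma caccio {b C k η : ℝ} {v : E2 → ℝ} (h : Cls b C k η v) (hb : 0 ≤ b) {σ : ℝ} (hσ : 1 ≤ σ)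
    (hk : σ ≤ k) :
    ∫ x, qq σ x ^ 3 * (Real.exp (v x) * (pd 0 v x ^ 2 + pd 1 v x ^ 2)) ≤ (24 + b) * C := by
  have hσ0 : 0 < σ := by linarith
  have hv := h.smooth
  have hv1 : ContDiff ℝ 1 v := hv.of_le (by norm_num)
  have he : ContDiff ℝ 1 fun x => Real.exp (v x) := hv1.exp
  have hec := he.continuous
  have lc := lapl_cont hv
  have bj : ∀ j : Fin 2, ∫ x, qq σ x ^ 3 * (Real.exp (v x) * pd j v x ^ 2) =
      6 / σ ^ 2 * (∫ x, qq σ x ^ 2 * (Real.exp (v x) * (x j * pd j v x))) -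
        ∫ x, qq σ x ^ 3 * (Real.exp (v x) * pd j (pd j v) x) := by
    intro j
    have hp := pd_contDiff1 hv j
    have hg : ContDiff ℝ 1 fun x : E2 => qq σ x ^ 3 * pd j v x := (qq_pow_contDiff σ 1).mul hp
    have := ibp hg he ((qq_pow_compact hσ0 2).mul_right) j
    have e1 : ∫ x, qq σ x ^ 3 * (Real.exp (v x) * pd j v x ^ 2) =
        ∫ x, qq σ x ^ 3 * pd j v x * pd j (fun x => Real.exp (v x)) x := by
      congr 1; ext x; rw [pd_exp hv1]; ring
    have a1 : Integrable fun x => qq σ x ^ 2 * (Real.exp (v x) * (x j * pd j v x)) :=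
      cc_int hσ0 1 (hec.mul ((coord_cont j).mul hp.continuous))
    have a2 : Integrable fun x => qq σ x ^ 3 * (Real.exp (v x) * pd j (pd j v) x) :=
      cc_int hσ0 2 (hec.mul (pd_cont hp j))
    rw [e1, this, ← integral_const_mul, ← integral_sub (a1.const_mul _) a2, ← integral_neg]
    congr 1; ext x
    have := qq_pd σ 1 j x
    norm_num at this
    rw [pd_mul ((qq_pow_contDiff σ 1).differentiable (by norm_num) x)
      (hp.differentiable (by norm_num) x), this]
    ring
  have i1 : ∀ j : Fin 2, Integrable fun x => qq σ x ^ 3 * (Real.exp (v x) * pd j v x ^ 2) :=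
    fun j => cc_int hσ0 2 (hec.mul ((pd_cont hv1 j).pow 2))
  have i2 : ∀ j : Fin 2, Integrable fun x => qq σ x ^ 2 * (Real.exp (v x) * (x j * pd j v x)) :=
    fun j => cc_int hσ0 1 (hec.mul ((coord_cont j).mul (pd_cont hv1 j)))
  have i3 : ∀ j : Fin 2, Integrable fun x => qq σ x ^ 3 * (Real.exp (v x) * pd j (pd j v) x) :=
    fun j => cc_int hσ0 2 (hec.mul (pd_cont (pd_contDiff1 hv j) j))
  have tot : ∫ x, qq σ x ^ 3 * (Real.exp (v x) * (pd 0 v x ^ 2 + pd 1 v x ^ 2)) =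
      6 / σ ^ 2 * (∫ x, qq σ x ^ 2 * (Real.exp (v x) * (x 0 * pd 0 v x + x 1 * pd 1 v x))) -
        ∫ x, qq σ x ^ 3 * (Real.exp (v x) * lapl v x) := by
    unfold lapl
    simp_rw [mul_add]
    rw [integral_add (i1 0) (i1 1), integral_add (i2 0) (i2 1), integral_add (i3 0) (i3 1), bj, bj]
    ring
  have p := poho_exp hv1 hσ0 0
  simp only [zero_add, Nat.cast_zero, pow_one] at p
  rw [tot, p]
  have q1 : - ∫ x, Real.exp (v x) * (2 * qq σ x ^ 2 - 2 * 2 * (n2 x / σ ^ 2) * qq σ x) ≤ 4 * C := by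
    have e1 : ∫ x, qq σ x ^ (0+1) * (4 * Real.exp (v x)) ≤ 4 * C := by
      refine (qq_pow_int_le hσ0 0 (g := fun x => 4 * Real.exp (v x)) (continuous_const.mul hec)
        (fun x _ => by positivity)).trans ?_
      rw [integral_const_mul]
      have := (h.mono hk le_rfl).mass
      linarith
    refine le_trans ?_ e1
    rw [← integral_neg]
    refine integral_mono ?_ (cc_int hσ0 0 (g := fun x => 4 * Real.exp (v x)) (continuous_const.mul hec)) fun x => ?_
    · have a1 := cc_int hσ0 1 (continuous_const.mul hec) (g := fun x => 2 * Real.exp (v x))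
      have a2 := cc_int hσ0 0 (g := fun x => Real.exp (v x) * (4 * (n2 x / σ ^ 2)))
        (hec.mul (continuous_const.mul (n2_cont.div_const _)))
      refine (a2.sub a1).congr (Eventually.of_forall fun x => ?_)
      simp only [Pi.sub_apply]; ring
    · dsimp only
      rcases lt_or_ge ‖x‖ σ with hx | hx
      · have t := tau_le hσ0 hx
        have t0 : 0 ≤ n2 x / σ ^ 2 := div_nonneg (n2_nonneg x) (by positivity)
        have q0 := qq_nonneg σ x
        have e := Real.exp_pos (v x)
        have : -(2 * qq σ x ^ 2 - 2 * 2 * (n2 x / σ ^ 2) * qq σ x) ≤ 4 * qq σ x := by nlinarith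
        nlinarith [mul_le_mul_of_nonneg_left this e.le]
      · simp [qq_zero hσ0 hx]
  have q2 : - ∫ x, qq σ x ^ 3 * (Real.exp (v x) * lapl v x) ≤ b * C := by
    have e1 : ∫ x, qq σ x ^ (2+1) * (b * Real.exp (v x)) ≤ b * C := by
      refine (qq_pow_int_le hσ0 2 (g := fun x => b * Real.exp (v x)) (continuous_const.mul hec)
        (fun x _ => by positivity)).trans ?_
      rw [integral_const_mul]
      exact mul_le_mul_of_nonneg_left (h.mono hk le_rfl).mass hb
    refine le_trans ?_ e1
    rw [← integral_neg]
    refine integral_mono (cc_int hσ0 2 (g := fun x => Real.exp (v x) * lapl v x) (hec.mul lc)).neg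
      (cc_int hσ0 2 (g := fun x => b * Real.exp (v x)) (continuous_const.mul hec))
      fun x => ?_
    dsimp only
    rcases lt_or_ge ‖x‖ σ with hx | hx
    · have hin : x ∈ ball (0:E2) k := by simpa using hx.trans_le hk
      have a1 := h.f_le x hin
      have a2 := h.f_nonneg x hin
      have a3 : Real.exp (v x) ≤ 1 := Real.exp_le_one_iff.2 (h.nonpos x hin)
      have q0 : 0 ≤ qq σ x ^ (2+1) := pow_nonneg (qq_nonneg σ x) _
      have e := Real.exp_pos (v x)
      have : Real.exp (v x) * (- lapl v x) ≤ b * Real.exp (v x) := by nlinarith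
      have m := mul_le_mul_of_nonneg_left this q0
      have e7 : qq σ x ^ (2+1) * (Real.exp (v x) * (- lapl v x)) =
        -(qq σ x ^ (2+1) * (Real.exp (v x) * lapl v x)) := by ring
      rw [e7] at m
      exact m
    · simp [qq_zero hσ0 hx]
  have hC : 0 ≤ C := le_trans (integral_nonneg fun x => (Real.exp_pos _).le) h.mass
  have s1 : 6 / σ ^ 2 ≤ 6 := div_le_self (by norm_num) (by nlinarith)
  have s2 : 0 ≤ 6 / σ ^ 2 := by positivity
  have s3 := mul_le_mul_of_nonneg_left q1 s2
  have s4 : 6 / σ ^ 2 * (4 * C) ≤ 6 * (4 * C) := by gcongr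
  linarith

/-- the Pohozaev integral -/
noncomputable def PI (v : E2 → ℝ) (σ : ℝ) : ℝ :=
  ∫ x, qq σ x ^ 3 * (- lapl v x * (x 0 * pd 0 v x + x 1 * pd 1 v x))

lemma lower_side {b C k η : ℝ} {v : E2 → ℝ} (h : Cls b C k η v) (hb : 0 ≤ b) (hη : 0 ≤ η)
    {σ : ℝ} (hσ : 1 ≤ σ) (hk : σ ≤ k) :
    (∫ x, (- lapl v x) * (2 * qq σ x ^ 3 - 6 * (n2 x / σ ^ 2) * qq σ x ^ 2))
      - η * (σ * C + σ * ((24 + b) * C) + 8 * C) ≤ - PI v σ := by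
  have hσ0 : 0 < σ := by linarith
  have hv := h.smooth
  have hv1 : ContDiff ℝ 1 v := hv.of_le (by norm_num)
  have hec : Continuous fun x => Real.exp (v x) := hv1.exp.continuous
  have lc := lapl_cont hv
  obtain ⟨w, hw⟩ := h.osc
  set T : E2 → ℝ := fun x => x 0 * pd 0 v x + x 1 * pd 1 v x with hT
  have hTc : Continuous T := ((coord_cont 0).mul (pd_cont hv1 0)).add ((coord_cont 1).mul (pd_cont hv1 1))
  set Z : E2 → ℝ := fun x => 2 * qq σ x ^ 3 - 6 * (n2 x / σ ^ 2) * qq σ x ^ 2 with hZ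
  have iZ : ∀ g : E2 → ℝ, Continuous g → Integrable fun x => g x * Z x := by
    intro g hg
    have a1 := cc_int hσ0 2 (continuous_const.mul hg) (g := fun x => 2 * g x)
    have a2 := cc_int hσ0 1 (g := fun x => g x * (6 * (n2 x / σ ^ 2)))
        (hg.mul (continuous_const.mul (n2_cont.div_const _)))
    refine (a1.sub a2).congr (Eventually.of_forall fun x => ?_)
    simp only [Pi.sub_apply, hZ]; ring
  have p := poho_exp hv1 hσ0 1
  have p' : ∫ x, qq σ x ^ 3 * (Real.exp (v x) * T x) = - ∫ x, Real.exp (v x) * Z x := by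
    have e : (fun x => Real.exp (v x) * Z x) = fun x => Real.exp (v x) *
        (2 * qq σ x ^ (1+2) - 2 * ((1:ℕ)+2) * (n2 x / σ ^ 2) * qq σ x ^ (1+1)) := by
      ext x; simp only [hZ]; push_cast; ring
    rw [e, ← p]
  set g : E2 → ℝ := fun x => - lapl v x - w * Real.exp (v x) with hg
  have gc : Continuous g := lc.neg.sub (continuous_const.mul hec)
  have main : - PI v σ = (∫ x, (- lapl v x) * Z x) - ∫ x, (qq σ x ^ 3 * (g x * T x) + g x * Z x) := by
    have i1 : Integrable fun x => qq σ x ^ 3 * (g x * T x) := cc_int hσ0 2 (gc.mul hTc)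
    have i2 := iZ g gc
    rw [integral_add i1 i2]
    have e1 : ∫ x, qq σ x ^ 3 * (g x * T x) = PI v σ - w * ∫ x, qq σ x ^ 3 * (Real.exp (v x) * T x) := by
      unfold PI
      rw [← integral_const_mul, ← integral_sub (cc_int hσ0 2 (g := fun x => - lapl v x * T x) (lc.neg.mul hTc))
        ((cc_int hσ0 2 (g := fun x => Real.exp (v x) * T x) (hec.mul hTc)).const_mul w)]
      congr 1; ext x; simp only [hg, hT]; ring
    have e2 : ∫ x, g x * Z x = (∫ x, (- lapl v x) * Z x) - w * ∫ x, Real.exp (v x) * Z x := by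
      rw [← integral_const_mul, ← integral_sub (iZ (fun x => - lapl v x) lc.neg) ((iZ _ hec).const_mul w)]
      congr 1; ext x; simp only [hg]; ring
    rw [e1, e2, p']; ring
  have err : ∫ x, (qq σ x ^ 3 * (g x * T x) + g x * Z x) ≤
      η * (σ * C + σ * ((24 + b) * C) + 8 * C) := by
    have hp2 : Continuous fun x => pd 0 v x ^ 2 + pd 1 v x ^ 2 :=
      ((pd_cont hv1 0).pow 2).add ((pd_cont hv1 1).pow 2)
    have j1 : Integrable fun x => σ * (qq σ x ^ 3 * Real.exp (v x)) :=
      (cc_int hσ0 2 hec).const_mul σ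
    have j2 : Integrable fun x => σ * (qq σ x ^ 3 *
        (Real.exp (v x) * (pd 0 v x ^ 2 + pd 1 v x ^ 2))) :=
      (cc_int hσ0 2 (hec.mul hp2)).const_mul σ
    have j3 : Integrable fun x => 8 * (qq σ x ^ 2 * Real.exp (v x)) :=
      (cc_int hσ0 1 hec).const_mul 8
    have j12 : Integrable fun x => σ * (qq σ x ^ 3 * Real.exp (v x)) + σ * (qq σ x ^ 3 *
        (Real.exp (v x) * (pd 0 v x ^ 2 + pd 1 v x ^ 2))) := j1.add j2
    have i1 : Integrable fun x => qq σ x ^ 3 * (g x * T x) := cc_int hσ0 2 (gc.mul hTc)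
    have le1 : ∫ x, (qq σ x ^ 3 * (g x * T x) + g x * Z x) ≤
        ∫ x, η * (σ * (qq σ x ^ 3 * Real.exp (v x)) +
          σ * (qq σ x ^ 3 * (Real.exp (v x) * (pd 0 v x ^ 2 + pd 1 v x ^ 2))) +
          8 * (qq σ x ^ 2 * Real.exp (v x))) := by
      refine integral_mono (i1.add (iZ g gc))
        ((j12.add j3).const_mul η) fun x => ?_
      dsimp only
      rcases lt_or_ge ‖x‖ σ with hx | hx
      · have hin : x ∈ ball (0:E2) k := by simpa using hx.trans_le hk
        have hgx : |g x| ≤ η * Real.exp (v x) := hw x hin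
        have q0 := qq_nonneg σ x
        have q1 := qq_le_one σ x
        have t := tau_le hσ0 hx
        have t0 : 0 ≤ n2 x / σ ^ 2 := div_nonneg (n2_nonneg x) (by positivity)
        have hTb : |T x| ≤ σ * (1 + (pd 0 v x ^ 2 + pd 1 v x ^ 2)) := by
          have c0 := (coord_le x 0).trans hx.le
          have c1 := (coord_le x 1).trans hx.le
          have a : ∀ z : ℝ, |z| ≤ 1 / 2 + z ^ 2 := fun z => by
            rw [← sq_abs]; nlinarith [sq_nonneg (|z| - 1/2)]
          calc |T x| ≤ |x 0| * |pd 0 v x| + |x 1| * |pd 1 v x| := by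
                rw [← abs_mul, ← abs_mul]; exact abs_add_le _ _
            _ ≤ σ * (1 / 2 + pd 0 v x ^ 2) + σ * (1 / 2 + pd 1 v x ^ 2) := by
                gcongr
                · exact a _
                · exact a _
            _ = _ := by ring
        have hZb : |Z x| ≤ 8 * qq σ x ^ 2 := by
          have e3 : qq σ x ^ 3 ≤ qq σ x ^ 2 := pow_le_pow_of_le_one q0 q1 (by norm_num)
          have e4 : 0 ≤ qq σ x ^ 3 := by positivity
          have e5 : n2 x / σ ^ 2 * qq σ x ^ 2 ≤ qq σ x ^ 2 := mul_le_of_le_one_left (by positivity) t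
          have e6 : 0 ≤ n2 x / σ ^ 2 * qq σ x ^ 2 := by positivity
          rw [abs_le]; constructor <;> simp only [hZ] <;> nlinarith
        have r1 : g x * (qq σ x ^ 3 * T x + Z x) ≤ (η * Real.exp (v x)) *
            (qq σ x ^ 3 * (σ * (1 + (pd 0 v x ^ 2 + pd 1 v x ^ 2))) + 8 * qq σ x ^ 2) := by
          refine (le_abs_self _).trans ?_
          rw [abs_mul]
          refine mul_le_mul hgx ?_ (abs_nonneg _) (mul_nonneg hη (Real.exp_pos _).le)
          refine (abs_add_le _ _).trans (add_le_add ?_ hZb)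
          rw [abs_mul, abs_of_nonneg (by positivity : 0 ≤ qq σ x ^ 3)]
          gcongr
        nlinarith
      · simp [qq_zero hσ0 hx, hZ]
    refine le1.trans ?_
    rw [integral_const_mul, integral_add j12 j3,
      integral_add j1 j2, integral_const_mul, integral_const_mul,
      integral_const_mul]
    have m := (h.mono hk le_rfl).mass
    have k1 := (qq_pow_int_le hσ0 2 hec (fun x _ => (Real.exp_pos _).le)).trans m
    have k3 := (qq_pow_int_le hσ0 1 hec (fun x _ => (Real.exp_pos _).le)).trans m
    have k2 := caccio h hb hσ hk
    gcongr
  rw [main]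
  linarith

lemma lower_side2 {b C k η : ℝ} {v : E2 → ℝ} (h : Cls b C k η v)
    {ρ σ : ℝ} (hρ : 0 < ρ) (hσ : ρ ≤ σ) (hk : σ ≤ k) :
    (8 - 12 * (ρ ^ 2 / σ ^ 2)) * Ms v ρ - 6 * Ms v k ≤
    ∫ x, (- lapl v x) * (2 * qq σ x ^ 3 - 6 * (n2 x / σ ^ 2) * qq σ x ^ 2) := by
  have hσ0 : 0 < σ := by linarith
  have lc := lapl_cont h.smooth
  have fk : IntegrableOn (fun x => - lapl v x) (ball 0 k) := cont_intOn lc.neg k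
  have hsub : ball (0:E2) ρ ⊆ ball 0 k := ball_subset_ball (by linarith)
  have e1 : ∫ x, (- lapl v x) * (2 * qq σ x ^ 3 - 6 * (n2 x / σ ^ 2) * qq σ x ^ 2) =
      ∫ x in ball (0:E2) k, (- lapl v x) * (2 * qq σ x ^ 3 - 6 * (n2 x / σ ^ 2) * qq σ x ^ 2) := by
    symm
    refine setIntegral_eq_integral_of_forall_compl_eq_zero fun x hx => ?_
    simp at hx
    simp [qq_zero hσ0 (hk.trans hx)]
  have e2 : Ms v ρ = ∫ x in ball (0:E2) k, (ball (0:E2) ρ).indicator (fun x => - lapl v x) x := by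
    rw [setIntegral_indicator measurableSet_ball, Set.inter_eq_right.2 hsub]; rfl
  have fi : IntegrableOn ((ball (0:E2) ρ).indicator (fun x => - lapl v x)) (ball 0 k) :=
    fk.indicator measurableSet_ball
  have e3 : (8 - 12 * (ρ ^ 2 / σ ^ 2)) * Ms v ρ - 6 * Ms v k =
      ∫ x in ball (0:E2) k, ((8 - 12 * (ρ ^ 2 / σ ^ 2)) *
        (ball (0:E2) ρ).indicator (fun x => - lapl v x) x - 6 * (- lapl v x)) := by
    rw [integral_sub (fi.const_mul _) (fk.const_mul _), integral_const_mul, integral_const_mul, ← e2]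
    rfl
  rw [e1, e3]
  refine setIntegral_mono_on ((fi.const_mul _).sub (fk.const_mul _)) ?_ measurableSet_ball
    fun x hx => ?_
  · refine cont_intOn (lc.neg.mul ?_) k
    exact (continuous_const.mul ((qq_cont σ).pow 3)).sub
      ((continuous_const.mul (n2_cont.div_const _)).mul ((qq_cont σ).pow 2))
  · have hf := h.f_nonneg x hx
    have q0 := qq_nonneg σ x
    have q1 := qq_le_one σ x
    by_cases hxρ : x ∈ ball (0:E2) ρ
    · rw [Set.indicator_of_mem hxρ]
      have hx' : ‖x‖ < ρ := by simpa using hxρ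
      have t := tau_le hσ0 (hx'.trans_le hσ)
      have t0 : 0 ≤ n2 x / σ ^ 2 := div_nonneg (n2_nonneg x) (by positivity)
      have t1 : n2 x / σ ^ 2 ≤ ρ ^ 2 / σ ^ 2 := by rw [n2_eq]; gcongr
      have hq : qq σ x = 1 - n2 x / σ ^ 2 := max_eq_right (by linarith)
      have : 2 - 12 * (ρ ^ 2 / σ ^ 2) ≤ 2 * qq σ x ^ 3 - 6 * (n2 x / σ ^ 2) * qq σ x ^ 2 := by
        have a2 : qq σ x ^ 2 ≤ 1 := pow_le_one₀ q0 q1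
        have a3 : 1 - 3 * (n2 x / σ ^ 2) ≤ qq σ x ^ 3 := by
          rw [hq]; nlinarith [mul_nonneg t0 t0, mul_nonneg (mul_nonneg t0 t0) (sub_nonneg.2 t)]
        nlinarith
      nlinarith [mul_le_mul_of_nonneg_left this hf]
    · rw [Set.indicator_of_notMem hxρ]
      have : -6 ≤ 2 * qq σ x ^ 3 - 6 * (n2 x / σ ^ 2) * qq σ x ^ 2 := by
        rcases lt_or_ge ‖x‖ σ with hx | hx
        · have t := tau_le hσ0 hx
          have t0 : 0 ≤ n2 x / σ ^ 2 := div_nonneg (n2_nonneg x) (by positivity)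
          have a2 : qq σ x ^ 2 ≤ 1 := pow_le_one₀ q0 q1
          have a3 : 0 ≤ qq σ x ^ 3 := by positivity
          have a4 : 0 ≤ qq σ x ^ 2 := by positivity
          nlinarith
        · simp [qq_zero hσ0 hx]
      nlinarith [mul_le_mul_of_nonneg_left this hf]

/-! ### Pohozaev, upper side -/

noncomputable def dt (x y : E2) : ℝ := x 0 * y 0 + x 1 * y 1

lemma dt_cont : Continuous fun p : E2 × E2 => dt p.1 p.2 := by
  unfold dt; fun_prop

lemma dt_le (x y : E2) : dt x y ≤ ‖x‖ * ‖y‖ := by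
  have hx := n2_eq x
  have hy := n2_eq y
  unfold n2 at hx hy
  refine abs_le_of_sq_le_sq' ?_ (by positivity) |>.2
  unfold dt
  rw [mul_pow, ← hx, ← hy]
  nlinarith [sq_nonneg (x 0 * y 1 - x 1 * y 0)]

lemma abs_dt_le (x y : E2) : |dt x y| ≤ ‖x‖ * ‖y‖ := by
  refine abs_le.2 ⟨?_, dt_le x y⟩
  have := dt_le (-x) y
  have e : dt (-x) y = - dt x y := by unfold dt; simp; ring
  rw [e, norm_neg] at this
  linarith

lemma qq_anti (σ : ℝ) {x y : E2} (h : ‖x‖ ≤ ‖y‖) : qq σ y ≤ qq σ x := by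
  unfold qq
  rw [n2_eq, n2_eq]
  gcongr

lemma mono_field (σ : ℝ) (x y : E2) :
    qq σ x ^ 3 * dt x (x - y) - qq σ y ^ 3 * dt y (x - y) ≤ n2 (x - y) := by
  set a := qq σ x ^ 3 with ha
  set c := qq σ y ^ 3 with hc
  have a1 : a ≤ 1 := pow_le_one₀ (qq_nonneg σ x) (qq_le_one σ x)
  have c1 : c ≤ 1 := pow_le_one₀ (qq_nonneg σ y) (qq_le_one σ y)
  have P := dt_le x y
  have hx := n2_eq x
  have hy := n2_eq y
  have key : 0 ≤ (‖x‖ - ‖y‖) * ((1 - a) * ‖x‖ - (1 - c) * ‖y‖) := by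
    rcases le_total ‖x‖ ‖y‖ with h | h
    · have : c ≤ a := pow_le_pow_left₀ (qq_nonneg σ y) (qq_anti σ h) 3
      refine mul_nonneg_of_nonpos_of_nonpos (by linarith) ?_
      have : (1 - a) * ‖x‖ ≤ (1 - c) * ‖y‖ := mul_le_mul (by linarith) h (norm_nonneg _) (by linarith)
      linarith
    · have : a ≤ c := pow_le_pow_left₀ (qq_nonneg σ x) (qq_anti σ h) 3
      refine mul_nonneg (by linarith) ?_
      have : (1 - c) * ‖y‖ ≤ (1 - a) * ‖x‖ := mul_le_mul (by linarith) h (norm_nonneg _) (by linarith)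
      linarith
  have m := mul_le_mul_of_nonneg_left P (by linarith : 0 ≤ (1 - a) + (1 - c))
  have e : n2 (x - y) - (a * dt x (x - y) - c * dt y (x - y)) =
      (1 - a) * n2 x + (1 - c) * n2 y - ((1 - a) + (1 - c)) * dt x y := by
    unfold n2 dt; simp; ring
  rw [hx, hy] at e
  nlinarith

lemma loc_int {g : E2 → ℝ} (hg : Continuous g) {x : E2} {R : ℝ} {φ : E2 → ℝ} (hφ : Continuous φ)
    (h0 : ∀ z, R ≤ ‖z‖ → φ z = 0) : Integrable fun y => φ (x - y) * g y := by
  refine Continuous.integrable_of_hasCompactSupport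
    ((hφ.comp (continuous_const.sub continuous_id)).mul hg) ?_
  refine HasCompactSupport.intro (isCompact_closedBall x R) fun y hy => ?_
  have : R < ‖x - y‖ := by
    rw [mem_closedBall, dist_comm, dist_eq_norm] at hy; simpa using hy
  simp [h0 _ this.le]

/-- mollified derivative -/
noncomputable def Gm (v : E2 → ℝ) (j : Fin 2) (e : ℝ) (x : E2) : ℝ :=
  6 * ∫ w, qq 1 w ^ 2 * pd j v (x - e • w)

lemma Gm_cont {v : E2 → ℝ} (hv : ContDiff ℝ 1 v) (j : Fin 2) :
    Continuous fun p : ℝ × E2 => Gm v j p.1 p.2 := by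
  unfold Gm
  refine continuous_const.mul ?_
  have e : (fun p : ℝ × E2 => ∫ w, qq 1 w ^ 2 * pd j v (p.2 - p.1 • w)) =
      fun p : ℝ × E2 => ∫ w in closedBall (0:E2) 1, qq 1 w ^ 2 * pd j v (p.2 - p.1 • w) := by
    ext p
    symm
    refine setIntegral_eq_integral_of_forall_compl_eq_zero fun x hx => ?_
    simp at hx
    simp [qq_zero one_pos hx.le]
  rw [e]
  refine continuous_parametric_integral_of_continuous ?_ (isCompact_closedBall _ _)
  have c1 := pd_cont hv j
  have c2 := qq_cont 1
  unfold Function.uncurry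
  fun_prop

lemma Gm_zero (v : E2 → ℝ) (j : Fin 2) (x : E2) : Gm v j 0 x = 2 * Real.pi * pd j v x := by
  unfold Gm
  simp only [zero_smul, sub_zero]
  rw [integral_mul_const, integral_qq_sq]; ring

noncomputable def Lm (v : E2 → ℝ) (σ e : ℝ) : ℝ :=
  ∫ x, qq σ x ^ 3 * (- lapl v x * (x 0 * Gm v 0 e x + x 1 * Gm v 1 e x))

lemma Lm_cont {v : E2 → ℝ} (hv : ContDiff ℝ 2 v) {σ : ℝ} (hσ : 0 < σ) : Continuous (Lm v σ) := by
  have hv1 : ContDiff ℝ 1 v := hv.of_le (by norm_num)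
  have e : Lm v σ = fun e => ∫ x in closedBall (0:E2) σ,
      qq σ x ^ 3 * (- lapl v x * (x 0 * Gm v 0 e x + x 1 * Gm v 1 e x)) := by
    ext e
    symm
    refine setIntegral_eq_integral_of_forall_compl_eq_zero fun x hx => ?_
    simp at hx
    simp [qq_zero hσ hx.le]
  rw [e]
  refine continuous_parametric_integral_of_continuous ?_ (isCompact_closedBall _ _)
  have c1 := Gm_cont hv1 0
  have c3 := Gm_cont hv1 1
  have c2 := qq_cont σ
  have c4 := lapl_cont hv
  unfold Function.uncurry
  fun_prop

lemma Lm_zero (v : E2 → ℝ) (σ : ℝ) : Lm v σ 0 = 2 * Real.pi * PI v σ := by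
  unfold Lm PI
  rw [← integral_const_mul]
  congr 1; ext x
  rw [Gm_zero, Gm_zero]; ring

noncomputable def Phi (v : E2 → ℝ) (σ R e : ℝ) (p : E2 × E2) : ℝ :=
  (- lapl v p.1) * (- lapl v p.2) * (qq σ p.1 ^ 3 * (kap e R (n2 (p.1 - p.2)) * dt p.1 (p.1 - p.2)))

lemma Phi_int {v : E2 → ℝ} (hv : ContDiff ℝ 2 v) {σ R e : ℝ} (hσ : 0 < σ) (he : 0 < e)
    (hR : e < R) : Integrable (Phi v σ R e) := by
  have c1 := lapl_cont hv
  have c2 := qq_cont σ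
  have c3 := (kap_contDiff he hR).continuous
  have c4 := n2_cont
  have c5 : Continuous fun p : E2 × E2 => dt p.1 (p.1 - p.2) := by unfold dt; fun_prop
  have c : Continuous (Phi v σ R e) := by unfold Phi; fun_prop
  refine c.integrable_of_hasCompactSupport ?_
  refine HasCompactSupport.intro ((isCompact_closedBall (0:E2) σ).prod (isCompact_closedBall (0:E2) (σ + R)))
    fun p hp => ?_
  unfold Phi
  rcases lt_or_ge ‖p.1‖ σ with h1 | h1
  · have h2 : R ≤ ‖p.1 - p.2‖ := by
      by_contra h3
      apply hp
      refine ⟨by simpa using h1.le, ?_⟩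
      rw [mem_closedBall, dist_zero_right]
      have := norm_sub_norm_le p.2 p.1
      rw [norm_sub_rev] at this
      linarith
    have h3 : kap e R (n2 (p.1 - p.2)) = 0 := kap_zero he hR (by
      rw [n2_eq]; exact pow_le_pow_left₀ (by linarith) h2 2)
    simp [h3]
  · simp [qq_zero hσ h1]

lemma Phi_sum_le {b C R η σ e : ℝ} {v : E2 → ℝ} (h : Cls b C (2 * R) η v) (hσ : 0 < σ) (hσR : σ ≤ R)
    (he : 0 < e) (hR : e < R) (p : E2 × E2) : Phi v σ R e p + Phi v σ R e p.swap ≤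
      (ball (0:E2) (2*R)).indicator (fun x => - lapl v x) p.1 *
      (ball (0:E2) (2*R)).indicator (fun x => - lapl v x) p.2 := by
  obtain ⟨x, y⟩ := p
  have ind0 : ∀ x, 0 ≤ (ball (0:E2) (2*R)).indicator (fun x => - lapl v x) x :=
    fun x => Set.indicator_nonneg (fun x hx => h.f_nonneg x hx) x
  have e1 : Phi v σ R e (x, y) + Phi v σ R e (y, x) = ((- lapl v x) * (- lapl v y)) *
      (kap e R (n2 (x - y)) * (qq σ x ^ 3 * dt x (x - y) - qq σ y ^ 3 * dt y (x - y))) := by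
    have : n2 (y - x) = n2 (x - y) := by rw [n2_eq, n2_eq, norm_sub_rev]
    have d : dt y (y - x) = - dt y (x - y) := by unfold dt; simp; ring
    simp only [Phi, this, d]; ring
  simp only [Prod.swap_prod_mk]
  rw [e1]
  rcases le_or_gt R ‖x - y‖ with h2 | h2
  · have h3 : kap e R (n2 (x - y)) = 0 := kap_zero he hR (by
      rw [n2_eq]; exact pow_le_pow_left₀ (by linarith) h2 2)
    rw [h3]
    simpa using mul_nonneg (ind0 x) (ind0 y)
  · by_cases hxy : ‖x‖ < 2 * R ∧ ‖y‖ < 2 * R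
    · have hx : x ∈ ball (0:E2) (2*R) := by simpa using hxy.1
      have hy : y ∈ ball (0:E2) (2*R) := by simpa using hxy.2
      rw [Set.indicator_of_mem hx, Set.indicator_of_mem hy]
      refine mul_le_of_le_one_right (mul_nonneg (h.f_nonneg x hx) (h.f_nonneg y hy)) ?_
      have n0 := n2_nonneg (x - y)
      have := mul_le_mul_of_nonneg_left (mono_field σ x y) (kap_nonneg he hR n0)
      have := kap_mul_le he hR n0
      linarith
    · have t1 := norm_sub_norm_le x y
      have t2 := norm_sub_norm_le y x
      rw [norm_sub_rev y x] at t2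
      have : σ ≤ ‖x‖ ∧ σ ≤ ‖y‖ := by
        rw [not_and_or, not_lt, not_lt] at hxy
        rcases hxy with h | h <;> constructor <;> linarith
      rw [qq_zero hσ this.1, qq_zero hσ this.2]
      simpa using mul_nonneg (ind0 x) (ind0 y)

lemma J1_le {b C R η σ e : ℝ} {v : E2 → ℝ} (h : Cls b C (2 * R) η v) (hσ : 0 < σ) (hσR : σ ≤ R)
    (he : 0 < e) (hR : e < R) : ∫ x, ∫ y, Phi v σ R e (x, y) ≤ Ms v (2 * R) ^ 2 / 2 := by
  have hi : Integrable (Phi v σ R e) (volume.prod volume) := Phi_int h.smooth hσ he hR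
  have fi : Integrable ((ball (0:E2) (2*R)).indicator (fun x => - lapl v x)) :=
    (integrable_indicator_iff measurableSet_ball).2 (cont_intOn (lapl_cont h.smooth).neg _)
  have hi' : Integrable (fun p => Phi v σ R e p.swap) (volume.prod volume) := hi.swap
  have e1 := integral_prod _ hi
  have e2 : ∫ p : E2 × E2, Phi v σ R e p.swap ∂(volume.prod volume) = ∫ p, Phi v σ R e p ∂(volume.prod volume) :=
    integral_prod_swap _
  have e3 : ∫ p : E2 × E2, (Phi v σ R e p + Phi v σ R e p.swap) ∂(volume.prod volume) ≤
      ∫ p : E2 × E2, (ball (0:E2) (2*R)).indicator (fun x => - lapl v x) p.1 *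
      (ball (0:E2) (2*R)).indicator (fun x => - lapl v x) p.2 ∂(volume.prod volume) :=
    integral_mono (hi.add hi') (fi.mul_prod fi) fun p => Phi_sum_le h hσ hσR he hR p
  rw [integral_add hi hi', integral_prod_mul, integral_indicator measurableSet_ball, e2] at e3
  rw [← e1]
  change _ ≤ Ms v (2 * R) * Ms v (2 * R) at e3
  have e4 : ∫ p, Phi v σ R e p ∂(volume.prod volume) = ∫ p, Phi v σ R e p := rfl
  nlinarith

lemma upper_pt {b C R η σ e : ℝ} {v : E2 → ℝ} (h : Cls b C (2 * R) η v) (hσ : 0 < σ) (hσR : σ ≤ R)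
    (he : 0 < e) (hR : e < R) (x : E2) :
    -(qq σ x ^ 3 * (- lapl v x * (x 0 * Gm v 0 e x + x 1 * Gm v 1 e x))) ≤
    (∫ y, Phi v σ R e (x, y)) + qq σ x ^ 3 *
      (- lapl v x * (24 * σ / R ^ 3 * ∫ y in ball (0:E2) (2*R), - v y)) := by
  have hR0 : 0 < R := he.trans hR
  rcases lt_or_ge ‖x‖ σ with hx | hx
  swap
  · simp [qq_zero hσ hx, Phi]
  have hin : x ∈ ball (0:E2) (2 * R) := by simp; linarith
  have hf := h.f_nonneg x hin
  have lc := lapl_cont h.smooth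
  have vc := h.smooth.continuous
  have c3 := (kap_contDiff he hR).continuous
  have c4 := n2_cont
  have c5 := qq_cont R
  have k0 : ∀ z : E2, R ≤ ‖z‖ → kap e R (n2 z) = 0 := fun z hz => kap_zero he hR (by
      rw [n2_eq]; exact pow_le_pow_left₀ hR0.le hz 2)
  have a1 : ∀ j : Fin 2, Integrable fun y => (kap e R (n2 (x - y)) * (x - y) j) * lapl v y := by
    intro j
    refine loc_int (R := R) (φ := fun z => kap e R (n2 z) * z j) lc (by fun_prop) fun z hz => ?_
    simp [k0 z hz]
  have a2 : ∀ j : Fin 2, Integrable fun y => (x - y) j * qq R (x - y) * v y := by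
    intro j
    refine loc_int (R := R) (φ := fun z => z j * qq R z) vc (by fun_prop) fun z hz => ?_
    simp [qq_zero hR0 hz]
  have g : ∀ j : Fin 2, Gm v j e x = (∫ y, (kap e R (n2 (x-y)) * (x-y) j) * lapl v y) -
      24/R^4 * ∫ y, (x-y) j * qq R (x-y) * v y := fun j => repr_id h.smooth he hR j x
  have s1 : x 0 * (∫ y, (kap e R (n2 (x-y)) * (x-y) 0) * lapl v y) +
      x 1 * (∫ y, (kap e R (n2 (x-y)) * (x-y) 1) * lapl v y) =
      ∫ y, (x 0 * ((kap e R (n2 (x-y)) * (x-y) 0) * lapl v y) +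
        x 1 * ((kap e R (n2 (x-y)) * (x-y) 1) * lapl v y)) := by
    rw [integral_add ((a1 0).const_mul _) ((a1 1).const_mul _), integral_const_mul, integral_const_mul]
  have s2 : x 0 * (∫ y, (x-y) 0 * qq R (x-y) * v y) + x 1 * (∫ y, (x-y) 1 * qq R (x-y) * v y) =
      ∫ y, (x 0 * ((x-y) 0 * qq R (x-y) * v y) + x 1 * ((x-y) 1 * qq R (x-y) * v y)) := by
    rw [integral_add ((a2 0).const_mul _) ((a2 1).const_mul _), integral_const_mul, integral_const_mul]
  have s3 : ∫ y, Phi v σ R e (x, y) = - (qq σ x ^ 3 * (- lapl v x * (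
      ∫ y, (x 0 * ((kap e R (n2 (x-y)) * (x-y) 0) * lapl v y) +
        x 1 * ((kap e R (n2 (x-y)) * (x-y) 1) * lapl v y))))) := by
    rw [← integral_const_mul, ← integral_const_mul, ← integral_neg]
    congr 1; ext y
    simp only [Phi, dt]; ring
  have s4 : ∫ y, (x 0 * ((x-y) 0 * qq R (x-y) * v y) + x 1 * ((x-y) 1 * qq R (x-y) * v y)) ≤
      (σ * R) * ∫ y in ball (0:E2) (2*R), - v y := by
    rw [← integral_const_mul, ← integral_indicator measurableSet_ball]
    refine integral_mono (((a2 0).const_mul _).add ((a2 1).const_mul _)) ?_ fun y => ?_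
    · exact (integrable_indicator_iff measurableSet_ball).2
        (cont_intOn (continuous_const.mul vc.neg) _)
    · dsimp only
      have e1 : x 0 * ((x-y) 0 * qq R (x-y) * v y) + x 1 * ((x-y) 1 * qq R (x-y) * v y) =
          (dt x (x - y) * qq R (x - y)) * v y := by unfold dt; ring
      rw [e1]
      rcases lt_or_ge ‖x - y‖ R with h2 | h2
      · have hy : y ∈ ball (0:E2) (2*R) := by
          have := norm_sub_norm_le y x
          rw [norm_sub_rev] at this
          simp; linarith
        rw [Set.indicator_of_mem hy]
        have v0 := h.nonpos y hy
        have d := abs_le.1 (abs_dt_le x (x - y))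
        have d2 : ‖x‖ * ‖x - y‖ ≤ σ * R := mul_le_mul hx.le h2.le (norm_nonneg _) hσ.le
        have q0 := qq_nonneg R (x - y)
        have q1 := qq_le_one R (x - y)
        have sR : 0 < σ * R := by positivity
        have : -(dt x (x - y) * qq R (x - y)) ≤ σ * R := by nlinarith
        nlinarith
      · rw [qq_zero hR0 h2]
        simp only [mul_zero, zero_mul]
        refine Set.indicator_nonneg (fun y hy => ?_) y
        exact mul_nonneg (by positivity) (by linarith [h.nonpos y hy])
  have s5 : 24 / R ^ 4 * ((σ * R) * ∫ y in ball (0:E2) (2*R), - v y) =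
      24 * σ / R ^ 3 * ∫ y in ball (0:E2) (2*R), - v y := by field_simp
  have s6 := mul_le_mul_of_nonneg_left s4 (by positivity : 0 ≤ 24 / R ^ 4)
  rw [s5] at s6
  have q0 : 0 ≤ qq σ x ^ 3 := pow_nonneg (qq_nonneg σ x) 3
  have s7 := mul_le_mul_of_nonneg_left s6 (mul_nonneg q0 hf)
  rw [s3, ← s1]
  rw [← s2] at s7
  rw [g, g]
  linarith

lemma upper_e {b C R η σ e : ℝ} {v : E2 → ℝ} (h : Cls b C (2 * R) η v) (hσ : 0 < σ) (hσR : σ ≤ R)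
    (he : 0 < e) (hR : e < R) :
    - Lm v σ e ≤ Ms v (2 * R) ^ 2 / 2 +
      Ms v (2 * R) * (24 * σ / R ^ 3 * ∫ y in ball (0:E2) (2*R), - v y) := by
  have hR0 : 0 < R := he.trans hR
  have hv1 : ContDiff ℝ 1 v := h.smooth.of_le (by norm_num)
  have lc := lapl_cont h.smooth
  set K := 24 * σ / R ^ 3 * ∫ y in ball (0:E2) (2*R), - v y with hK
  have K0 : 0 ≤ K := mul_nonneg (by positivity)
    (setIntegral_nonneg measurableSet_ball fun y hy => by linarith [h.nonpos y hy])
  have c0 : Continuous fun x => Gm v 0 e x := (Gm_cont hv1 0).comp (Continuous.prodMk continuous_const continuous_id)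
  have c1 : Continuous fun x => Gm v 1 e x := (Gm_cont hv1 1).comp (Continuous.prodMk continuous_const continuous_id)
  have i1 : Integrable fun x => qq σ x ^ 3 * (- lapl v x * (x 0 * Gm v 0 e x + x 1 * Gm v 1 e x)) :=
    cc_int hσ 2 (by fun_prop)
  have i2 : Integrable fun x => qq σ x ^ 3 * (- lapl v x * K) :=
    cc_int hσ 2 (by fun_prop)
  have i3 : Integrable fun x => ∫ y, Phi v σ R e (x, y) :=
    Integrable.integral_prod_left (Phi_int h.smooth hσ he hR)
  have m := integral_mono i1.neg (i3.add i2) fun x => upper_pt h hσ hσR he hR x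
  simp only [Pi.neg_apply, Pi.add_apply] at m
  rw [integral_neg, integral_add i3 i2] at m
  have j1 := J1_le h hσ hσR he hR
  have j2 : ∫ x, qq σ x ^ 3 * (- lapl v x * K) ≤ Ms v (2 * R) * K := by
    have := qq_pow_int_le hσ 2 (g := fun x => - lapl v x * K) (by fun_prop) fun x hx =>
      mul_nonneg (h.f_nonneg x (ball_subset_ball (by linarith) hx)) K0
    refine this.trans ?_
    rw [integral_mul_const]
    exact mul_le_mul_of_nonneg_right (Ms_mono h (by linarith)) K0
  unfold Lm
  linarith

lemma upper_side {b C R η σ : ℝ} {v : E2 → ℝ} (h : Cls b C (2 * R) η v) (hσ : 0 < σ) (hσR : σ ≤ R) :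
    2 * Real.pi * (- PI v σ) ≤ Ms v (2 * R) ^ 2 / 2 +
      Ms v (2 * R) * (24 * σ / R ^ 3 * ∫ y in ball (0:E2) (2*R), - v y) := by
  have t : Tendsto (fun e => - Lm v σ e) (nhdsWithin 0 (Set.Ioi 0)) (nhds (- Lm v σ 0)) :=
    ((Lm_cont h.smooth hσ).neg.tendsto 0).mono_left nhdsWithin_le_nhds
  have := le_of_tendsto t (b := Ms v (2 * R) ^ 2 / 2 +
      Ms v (2 * R) * (24 * σ / R ^ 3 * ∫ y in ball (0:E2) (2*R), - v y)) (by
    filter_upwards [Ioo_mem_nhdsGT (show (0:ℝ) < R by linarith)] with e he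
    exact upper_e h hσ hσR he.1 he.2)
  rw [Lm_zero] at this
  linarith

/-! ### The step and the induction -/

lemma err_tendsto (b B σ : ℝ) :
    Tendsto (fun k : ℝ => B * (24 * σ / (k/4) ^ 3 * (2 * k ^ 2 * (b + B / 6 * Real.log k))))
      atTop (nhds 0) := by
  have h1 : Tendsto (fun k : ℝ => k⁻¹) atTop (nhds 0) := tendsto_inv_atTop_zero
  have h2 : Tendsto (fun k : ℝ => Real.log k / k) atTop (nhds 0) := by
    simpa using Real.tendsto_pow_log_div_mul_add_atTop 1 0 1 one_ne_zero
  have h3 := ((h1.const_mul b).add (h2.const_mul (B / 6))).const_mul (B * (3072 * σ))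
  simp only [mul_zero, add_zero] at h3
  refine h3.congr' ?_
  filter_upwards [eventually_gt_atTop 0] with k hk
  field_simp
  ring

lemma step (b C κ₀ ρ : ℝ) (hb : 0 ≤ b) (hC : 0 ≤ C) (hκ : 0 < κ₀) (hρ : 1 ≤ ρ) :
    ∃ k ≥ ρ, ∃ η > 0, ∀ v, Cls b C k η v →
      Ms v k * (2 - Ms v k / (4 * Real.pi)) ≤ κ₀ + 8 * (Ms v k - Ms v ρ) := by
  have hpi := Real.pi_gt_three
  set B := b * C with hB
  have B0 : 0 ≤ B := by positivity
  set L := 1 + 36 * B / κ₀ with hL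
  have L1 : 1 ≤ L := by rw [hL]; have : 0 ≤ 36 * B / κ₀ := by positivity
                        linarith
  set σ := ρ * L with hσ
  have σρ : ρ ≤ σ := le_mul_of_one_le_right (by linarith) L1
  have hs : 12 * (ρ ^ 2 / σ ^ 2) * B ≤ κ₀ / 3 := by
    have e : ρ ^ 2 / σ ^ 2 = 1 / L ^ 2 := by
      rw [hσ]; field_simp
    have l2 : L ≤ L ^ 2 := by nlinarith
    have l3 : 36 * B ≤ κ₀ * L := by
      rw [hL, mul_add, mul_div_cancel₀ _ hκ.ne']; linarith
    rw [e]
    have : 12 * (1 / L ^ 2) * B = 12 * B / L ^ 2 := by ring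
    rw [this, div_le_iff₀ (by positivity)]
    nlinarith
  obtain ⟨k, hk⟩ := (((err_tendsto b B σ).eventually_le_const (show (0:ℝ) < κ₀ / 3 by positivity)).and
    (eventually_ge_atTop (4 * σ))).exists
  set Q := σ * C + σ * ((24 + b) * C) + 8 * C with hQ
  have σ0 : 0 ≤ σ := by linarith
  have Q0 : 0 ≤ Q := by positivity
  refine ⟨k, by linarith [hk.2], κ₀ / (3 * (Q + 1)), by positivity, fun v h => ?_⟩
  have k1 : 1 ≤ k := by linarith [hk.2]
  have eη : κ₀ / (3 * (Q + 1)) * Q ≤ κ₀ / 3 := by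
    rw [div_mul_eq_mul_div, div_le_div_iff₀ (by positivity) (by norm_num)]
    nlinarith
  have l1 := lower_side h hb (by positivity) (show 1 ≤ σ by linarith) (show σ ≤ k by linarith [hk.2])
  have l2 := lower_side2 h (show 0 < ρ by linarith) σρ (show σ ≤ k by linarith [hk.2])
  have hk2 : 2 * (k / 4) = k / 2 := by ring
  have h2 : Cls b C (2 * (k / 4)) (κ₀ / (3 * (Q + 1))) v := h.mono (by linarith) le_rfl
  have u := upper_side h2 (show 0 < σ by linarith) (show σ ≤ k / 4 by linarith [hk.2])
  have n := neg_int h hb k1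
  rw [hk2] at u h2
  have MB : Ms v k ≤ B := Ms_le h hb
  have M0 := Ms_nonneg h
  have M20 := Ms_nonneg h2
  have M2 : Ms v (k/2) ≤ Ms v k := Ms_mono h (by linarith)
  have Mρ : Ms v ρ ≤ Ms v k := Ms_mono h (by linarith [hk.2])
  have lg : 0 ≤ Real.log k := Real.log_nonneg k1
  have N0 : 0 ≤ ∫ y in ball (0:E2) (k/2), - v y :=
    setIntegral_nonneg measurableSet_ball fun y hy => by linarith [h2.nonpos y hy]
  have N1 : ∫ y in ball (0:E2) (k/2), - v y ≤ 2 * k ^ 2 * (b + B / 6 * Real.log k) := by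
    refine n.trans ?_
    gcongr
  have e1 : Ms v (k/2) * (24 * σ / (k/4) ^ 3 * ∫ y in ball (0:E2) (k/2), - v y) ≤ κ₀ / 3 := by
    refine le_trans ?_ hk.1
    have := M2.trans MB
    gcongr
  have e2 : Ms v (k/2) ^ 2 ≤ Ms v k ^ 2 := pow_le_pow_left₀ M20 M2 2
  have e3 : - PI v σ ≤ Ms v k ^ 2 / (4 * Real.pi) + κ₀ / 3 := by
    have : 2 * Real.pi * (- PI v σ) ≤ 2 * Real.pi * (Ms v k ^ 2 / (4 * Real.pi) + κ₀ / 3) := by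
      have : 2 * Real.pi * (Ms v k ^ 2 / (4 * Real.pi) + κ₀ / 3) =
        Ms v k ^ 2 / 2 + 2 * Real.pi * (κ₀ / 3) := by field_simp; ring
      nlinarith
    exact le_of_mul_le_mul_left this (by positivity)
  have e4 : 12 * (ρ ^ 2 / σ ^ 2) * Ms v ρ ≤ κ₀ / 3 :=
    (mul_le_mul_of_nonneg_left (Mρ.trans MB) (by positivity)).trans hs
  have e5 : Ms v k * (2 - Ms v k / (4 * Real.pi)) = 2 * Ms v k - Ms v k ^ 2 / (4 * Real.pi) := by ring
  rw [e5]
  linarith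

lemma core (b C ε : ℝ) (hb : 0 ≤ b) (hC : 0 ≤ C) (hε : 0 < ε) :
    ∃ k > 0, ∃ η > 0, ∀ v, Cls b C k η v → 8 * Real.pi * (1 - ε) ≤ Ms v k := by
  have hpi := Real.pi_pos
  set ρ₀ := 1 + C * Real.exp b with hρ
  have hρ1 : 1 ≤ ρ₀ := by rw [hρ]; have : 0 ≤ C * Real.exp b := by positivity
                          linarith
  set c := 8 * Real.pi * ε / 36 with hc
  have c0 : 0 < c := by positivity
  have ind : ∀ n : ℕ, ∃ k ≥ ρ₀, ∃ η > 0, ∀ v, Cls b C k η v →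
      8 * Real.pi * (1 - ε) ≤ Ms v k ∨ n * c ≤ Ms v k := by
    intro n
    induction n with
    | zero => exact ⟨ρ₀, le_rfl, 1, one_pos, fun v h => Or.inr (by simpa using Ms_nonneg h)⟩
    | succ n ih =>
      obtain ⟨k, hk, η, hη, H⟩ := ih
      obtain ⟨k', hk', η', hη', H'⟩ := step b C c k hb hC c0 (hρ1.trans hk)
      refine ⟨k', hk.trans hk', min η η', lt_min hη hη', fun v h => ?_⟩
      have mono : Ms v k ≤ Ms v k' := Ms_mono h hk'
      rcases H v (h.mono hk' (min_le_left _ _)) with h1 | h1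
      · exact Or.inl (h1.trans mono)
      · have s := H' v (h.mono le_rfl (min_le_right _ _))
        rcases le_total (Ms v k' - Ms v k) c with h2 | h2
        · left
          have m := mass_lower h hb (by linarith) (by linarith [hρ])
          by_contra h3
          push Not at h3
          have h4 : 8 * Real.pi * ε / (4 * Real.pi) < 2 - Ms v k' / (4 * Real.pi) := by
            rw [div_lt_iff₀ (by positivity), sub_mul, div_mul_cancel₀ _ (by positivity)]
            linarith
          have h5 : 8 * Real.pi * ε / (4 * Real.pi) = 2 * ε := by field_simp; ring
          rw [h5] at h4
          have h6 : Real.pi * (2 * ε) < Ms v k' * (2 - Ms v k' / (4 * Real.pi)) :=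
            mul_lt_mul' m h4 (by positivity) (by linarith)
          rw [hc] at s h2
          linarith
        · right
          push_cast
          linarith
  obtain ⟨n, hn⟩ := exists_nat_gt (b * C / c)
  rw [div_lt_iff₀ c0] at hn
  obtain ⟨k, hk, η, hη, H⟩ := ind n
  refine ⟨k, by linarith, η, hη, fun v h => ?_⟩
  rcases H v h with h1 | h1
  · exact h1
  · linarith [Ms_le h hb]

/-! ### Rescaling -/

lemma pd_congr {g h : E2 → ℝ} {x : E2} (e : g =ᶠ[nhds x] h) (j : Fin 2) :
    pd j g =ᶠ[nhds x] pd j h := by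
  filter_upwards [e.fderiv (𝕜 := ℝ)] with y hy
  unfold pd; rw [hy]

lemma lapl_congr {g h : E2 → ℝ} {x : E2} (e : g =ᶠ[nhds x] h) : lapl g x = lapl h x := by
  unfold lapl
  rw [(pd_congr (pd_congr e 0) 0).eq_of_nhds, (pd_congr (pd_congr e 1) 1).eq_of_nhds]

lemma lapl_scale {u : E2 → ℝ} {x₀ : E2} {l c : ℝ} {w : E2} (hu : ContDiffAt ℝ 2 u (x₀ + l • w)) :
    lapl (fun w => u (x₀ + l • w) - c) w = l ^ 2 * lapl u (x₀ + l • w) := by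
  have cm : ContinuousAt (fun w : E2 => x₀ + l • w) w := by fun_prop
  have ev : ∀ᶠ z in nhds w, ContDiffAt ℝ 2 u (x₀ + l • z) :=
    cm.eventually (hu.eventually (by norm_num))
  have p1 : ∀ j, pd j (fun w => u (x₀ + l • w) - c) =ᶠ[nhds w]
      fun w => l * pd j u (x₀ + l • w) := by
    intro j
    filter_upwards [ev] with z hz
    rw [← pd_scale (hz.differentiableAt (by norm_num))]
    unfold pd
    rw [fderiv_sub_const]
  have p2 : ∀ j, pd j (pd j (fun w => u (x₀ + l • w) - c)) w = l ^ 2 * pd j (pd j u) (x₀ + l • w) := by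
    intro j
    rw [(pd_congr (p1 j) j).eq_of_nhds]
    have hd : DifferentiableAt ℝ (pd j u) (x₀ + l • w) := by
      have : ContDiffAt ℝ 1 (fderiv ℝ u) (x₀ + l • w) := hu.fderiv_right (by norm_num)
      exact ((this.differentiableAt (by norm_num)).clm_apply (differentiableAt_const _))
    have hd2 : DifferentiableAt ℝ (fun w => pd j u (x₀ + l • w)) w :=
      DifferentiableAt.comp (f := fun w : E2 => x₀ + l • w) w hd (by fun_prop)
    have e : pd j (fun w => l * pd j u (x₀ + l • w)) w = l * pd j (fun w => pd j u (x₀ + l • w)) w := by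
      change fderiv ℝ (fun w => l * pd j u (x₀ + l • w)) w (EuclideanSpace.single j 1) = _
      rw [fderiv_const_mul hd2]
      rfl
    rw [e, pd_scale hd]; ring
  unfold lapl
  have := p2 0
  have := p2 1
  unfold lapl at *
  rw [p2, p2]; ring

lemma change_var (F : E2 → ℝ) (x₀ : E2) {r k : ℝ} (hr : 0 < r) :
    ∫ θ in ball (0:E2) k, F (x₀ + r • θ) = (r ^ 2)⁻¹ * ∫ y in ball x₀ (k * r), F y := by
  rw [← integral_indicator measurableSet_ball, ← integral_indicator measurableSet_ball]
  have e : ∀ θ : E2, (ball (0:E2) k).indicator (fun θ => F (x₀ + r • θ)) θ =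
      (fun z => (ball x₀ (k * r)).indicator F (x₀ + z)) (r • θ) := by
    intro θ
    have : x₀ + r • θ ∈ ball x₀ (k * r) ↔ θ ∈ ball (0:E2) k := by
      simp only [mem_ball, dist_self_add_left, dist_zero_right, norm_smul, Real.norm_eq_abs,
        abs_of_pos hr]
      rw [mul_comm r]; exact mul_lt_mul_iff_left₀ hr
    by_cases h : θ ∈ ball (0:E2) k
    · rw [Set.indicator_of_mem h]; dsimp only; rw [Set.indicator_of_mem (this.2 h)]
    · rw [Set.indicator_of_notMem h]; dsimp only
      rw [Set.indicator_of_notMem (fun h' => h (this.1 h'))]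
  simp_rw [e]
  rw [Measure.integral_comp_smul (volume : Measure E2)
    (fun z => (ball x₀ (k * r)).indicator F (x₀ + z)) r, integral_add_left_eq_self]
  simp

lemma rescale {u V : E2 → ℝ} {x₀ : E2} {δ r b C : ℝ}
    (hu : ContDiffOn ℝ 2 u (closedBall (0:E2) 1))
    (hVb : ∀ x ∈ ball (0:E2) 1, 0 ≤ V x ∧ V x ≤ b)
    (hpde : ∀ x ∈ ball (0:E2) 1, -(lapl u x) = V x * Real.exp (u x))
    (hint : (∫ y in ball (0:E2) 1, Real.exp (u y)) ≤ C)
    (hmax : ∀ y ∈ closedBall (0:E2) 1, u y ≤ u x₀)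
    (hr : r = Real.exp (-(u x₀) / 2)) (hδ : 0 < δ) (hsub : ball x₀ δ ⊆ ball 0 1) :
    ∃ v : E2 → ℝ, ∀ k, 0 < k → k * r ≤ δ / 2 →
      (∀ η, (∀ y ∈ ball x₀ (k * r), |V y - V x₀| ≤ η) → Cls b C k η v) ∧
      Ms v k = ∫ y in ball x₀ (k * r), V y * Real.exp (u y) := by
  have r0 : 0 < r := by rw [hr]; exact Real.exp_pos _
  have hr2 : r ^ 2 = Real.exp (-(u x₀)) := by
    rw [hr, ← Real.exp_nat_mul]; congr 1; push_cast; ring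
  have D0 : 0 < δ / r := by positivity
  have ucd : ∀ y ∈ ball (0:E2) 1, ContDiffAt ℝ 2 u y := fun y hy =>
    hu.contDiffAt (mem_of_superset (isOpen_ball.mem_nhds hy) ball_subset_closedBall)
  set χ : ContDiffBump (0:E2) := ⟨δ / r / 2, δ / r * (3/4), by positivity, by linarith⟩ with hχ
  have χin : χ.rIn = δ / r / 2 := rfl
  have χout : χ.rOut = δ / r * (3/4) := rfl
  set G : E2 → ℝ := fun θ => u (x₀ + r • θ) - u x₀ with hG
  have inb : ∀ θ : E2, ‖θ‖ < δ / r → x₀ + r • θ ∈ ball (0:E2) 1 := by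
    intro θ hθ
    apply hsub
    simp only [mem_ball, dist_self_add_left, norm_smul, Real.norm_eq_abs, abs_of_pos r0]
    rw [lt_div_iff₀ r0] at hθ; linarith
  have Gcd : ∀ θ : E2, ‖θ‖ < δ / r → ContDiffAt ℝ 2 G θ := by
    intro θ hθ
    have h1 := ucd _ (inb θ hθ)
    have h2 : ContDiffAt ℝ 2 (fun θ : E2 => x₀ + r • θ) θ := by fun_prop
    exact (h1.comp θ h2).sub contDiffAt_const
  refine ⟨fun θ => χ θ * G θ, fun k hk hkr => ?_⟩
  have kD : k ≤ δ / r / 2 := by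
    rw [div_div, le_div_iff₀ (by positivity)]; linarith
  have sm : ContDiff ℝ 2 fun θ => χ θ * G θ := by
    rw [contDiff_iff_contDiffAt]
    intro θ
    rcases lt_or_ge ‖θ‖ (δ / r) with h | h
    · exact χ.contDiffAt.mul (Gcd θ h)
    · have : (fun θ => χ θ * G θ) =ᶠ[nhds θ] fun _ => 0 := by
        have hn : θ ∉ tsupport χ := by
          rw [χ.tsupport_eq, χout]; simp; linarith
        have := notMem_tsupport_iff_eventuallyEq.1 hn
        filter_upwards [this] with z hz
        simp [hz]
      exact contDiffAt_const.congr_of_eventuallyEq this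
  have one : ∀ θ ∈ ball (0:E2) k, (fun θ => χ θ * G θ) =ᶠ[nhds θ] G := by
    intro θ hθ
    filter_upwards [isOpen_ball.mem_nhds hθ] with z hz
    have : χ z = 1 := χ.one_of_mem_closedBall (by
      rw [χin]; exact closedBall_subset_closedBall kD (ball_subset_closedBall hz))
    simp [this]
  have nl : ∀ θ ∈ ball (0:E2) k, ‖θ‖ < δ / r := by
    intro θ hθ; have : ‖θ‖ < k := by simpa using hθ
    linarith
  have lv : ∀ θ ∈ ball (0:E2) k, - lapl (fun θ => χ θ * G θ) θ =
      r ^ 2 * (V (x₀ + r • θ) * Real.exp (u (x₀ + r • θ))) := by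
    intro θ hθ
    rw [lapl_congr (one θ hθ), hG, lapl_scale (ucd _ (inb θ (nl θ hθ))),
      ← hpde _ (inb θ (nl θ hθ))]
    ring
  have ev : ∀ θ ∈ ball (0:E2) k, Real.exp (χ θ * G θ) = r ^ 2 * Real.exp (u (x₀ + r • θ)) := by
    intro θ hθ
    have := (one θ hθ).eq_of_nhds
    rw [this, hG, hr2, ← Real.exp_add]; congr 1; ring
  have lv2 : ∀ θ ∈ ball (0:E2) k, - lapl (fun θ => χ θ * G θ) θ =
      V (x₀ + r • θ) * Real.exp (χ θ * G θ) := by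
    intro θ hθ; rw [lv θ hθ, ev θ hθ]; ring
  have sub2 : ball x₀ (k * r) ⊆ ball (0:E2) 1 :=
    (ball_subset_ball (by linarith)).trans hsub
  refine ⟨fun η hη => ⟨sm, χ.hasCompactSupport.mul_right, by simp [hG], ?_, ?_, ?_, ?_, ?_⟩, ?_⟩
  · intro θ hθ
    have := (one θ hθ).eq_of_nhds
    rw [this]
    have := hmax _ (ball_subset_closedBall (inb θ (nl θ hθ)))
    simp only [hG]; linarith
  · intro θ hθ
    rw [lv2 θ hθ]
    exact mul_nonneg (hVb _ (inb θ (nl θ hθ))).1 (Real.exp_pos _).le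
  · intro θ hθ
    rw [lv2 θ hθ]
    exact mul_le_mul_of_nonneg_right (hVb _ (inb θ (nl θ hθ))).2 (Real.exp_pos _).le
  · refine ⟨V x₀, fun θ hθ => ?_⟩
    rw [lv2 θ hθ, ← sub_mul, abs_mul, abs_of_pos (Real.exp_pos _)]
    refine mul_le_mul_of_nonneg_right (hη _ ?_) (Real.exp_pos _).le
    have : ‖θ‖ < k := by simpa using hθ
    simp only [mem_ball, dist_self_add_left, norm_smul, Real.norm_eq_abs, abs_of_pos r0]
    nlinarith
  · rw [setIntegral_congr_fun measurableSet_ball ev, integral_const_mul,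
      change_var (fun y => Real.exp (u y)) x₀ r0, mul_inv_cancel_left₀ (by positivity)]
    refine le_trans (setIntegral_mono_set ?_ ?_ sub2.eventuallyLE) hint
    · exact ((Real.continuous_exp.comp_continuousOn hu.continuousOn).integrableOn_compact
        (isCompact_closedBall _ _)).mono_set ball_subset_closedBall
    · exact Eventually.of_forall fun x => (Real.exp_pos _).le
  · unfold Ms
    rw [setIntegral_congr_fun measurableSet_ball lv, integral_const_mul,
      change_var (fun y => V y * Real.exp (u y)) x₀ r0, mul_inv_cancel_left₀ (by positivity)]

lemma dist_sphere {x : E2} (hx : x ∈ ball (0:E2) 1) :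
    0 < infDist x (sphere (0:E2) 1) ∧ ball x (infDist x (sphere (0:E2) 1)) ⊆ ball 0 1 := by
  have hx1 : ‖x‖ < 1 := by simpa using hx
  have ne : (EuclideanSpace.single 0 1 : E2) ∈ sphere (0:E2) 1 := by simp
  constructor
  · refine (isClosed_sphere.notMem_iff_infDist_pos ⟨_, ne⟩).1 ?_
    simp; linarith
  · have : infDist x (sphere (0:E2) 1) ≤ 1 - ‖x‖ := by
      by_cases h0 : x = 0
      · have := infDist_le_dist_of_mem (x := x) ne
        subst h0
        simpa using this
      · have hn : 0 < ‖x‖ := norm_pos_iff.2 h0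
        have hm : ‖x‖⁻¹ • x ∈ sphere (0:E2) 1 := by
          simp [norm_smul, hn.ne']
        refine (infDist_le_dist_of_mem (x := x) hm).trans ?_
        have : x - ‖x‖⁻¹ • x = (1 - ‖x‖⁻¹) • x := by rw [sub_smul, one_smul]
        have h1 : 1 ≤ ‖x‖⁻¹ := (one_le_inv₀ hn).2 hx1.le
        rw [dist_eq_norm, this, norm_smul, Real.norm_eq_abs, abs_of_nonpos (by linarith), neg_sub,
          sub_mul, inv_mul_cancel₀ hn.ne']
        linarith
    intro y hy
    have h1 := norm_sub_norm_le y x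
    rw [mem_ball, dist_eq_norm] at hy
    simp; linarith

theorem stmt17
    (b A s C₀ : ℝ) (hs1 : 1/2 < s) (hs2 : s ≤ 1)
    (V u : ℕ → E2 → ℝ) (x_ : ℕ → E2) (δ r : ℕ → ℝ) (v : ℕ → E2 → ℝ)
    (hu : ∀ i, ContDiffOn ℝ 2 (u i) (closedBall (0:E2) 1))
    (hVb : ∀ i, ∀ x ∈ ball (0:E2) 1, 0 ≤ V i x ∧ V i x ≤ b)
    (hVhol : ∀ i, ∀ x ∈ ball (0:E2) 1, ∀ y ∈ ball (0:E2) 1, |V i x - V i y| ≤ A * ‖x - y‖ ^ s)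
    (hpde : ∀ i, ∀ x ∈ ball (0:E2) 1, -(lapl (u i) x) = V i x * Real.exp (u i x))
    (hbc : ∀ i, ∀ x ∈ sphere (0:E2) 1, u i x = 0)
    (hint : ∀ i, (∫ y in ball (0:E2) 1, Real.exp (u i y)) ≤ C₀)
    (hxmem : ∀ i, x_ i ∈ ball (0:E2) 1)
    (hmax : ∀ i, ∀ y ∈ closedBall (0:E2) 1, u i y ≤ u i (x_ i))
    (hblow : Tendsto (fun i => u i (x_ i)) atTop atTop)
    (hδ : ∀ i, δ i = Metric.infDist (x_ i) (sphere (0:E2) 1))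
    (hδ0 : Tendsto δ atTop (nhds 0))
    (hr : ∀ i, r i = Real.exp (-(u i (x_ i)) / 2))
    (hrδ : Tendsto (fun i => r i / δ i) atTop (nhds 0))
    (hmass : Tendsto (fun i => ∫ y in ball (x_ i) (δ i / 2), V i y * Real.exp (u i y)) atTop
      (nhds (8 * Real.pi)))
    (hbound : ∀ ε : ℝ, 0 < ε → ε < 1 → ∃ Cε : ℝ, ∀ i, ∀ y : E2, ‖y‖ = ε →
      u i (x_ i + δ i • y) ≤ Cε)
    (hv : ∀ i θ, v i θ = u i (x_ i + r i • θ) - u i (x_ i)) :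
    ∀ ε : ℝ, 0 < ε → ∃ k > (0:ℝ), ∃ i₀ : ℕ, ∀ i ≥ i₀,
      8 * Real.pi * (1 - ε) ≤
          (∫ y in ball (x_ i) (k * Real.exp (-(u i (x_ i)) / 2)), V i y * Real.exp (u i y)) ∧
        (∫ y in ball (x_ i) (k * Real.exp (-(u i (x_ i)) / 2)), V i y * Real.exp (u i y)) ≤
          8 * Real.pi * (1 + ε) := by
  intro ε hε
  have hb : 0 ≤ b := (hVb 0 _ (hxmem 0)).1.trans (hVb 0 _ (hxmem 0)).2
  have hC : 0 ≤ C₀ := le_trans (integral_nonneg fun x => (Real.exp_pos _).le) (hint 0)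
  obtain ⟨k, hk, η, hη, H⟩ := core b C₀ ε hb hC hε
  refine ⟨k, hk, ?_⟩
  have hδp : ∀ i, 0 < δ i ∧ ball (x_ i) (δ i) ⊆ ball 0 1 := fun i => by
    rw [hδ]; exact dist_sphere (hxmem i)
  have rp : ∀ i, 0 < r i := fun i => by rw [hr]; exact Real.exp_pos _
  have r0 : Tendsto r atTop (nhds 0) := by
    have := hrδ.mul hδ0
    rw [mul_zero] at this
    exact this.congr fun i => div_mul_cancel₀ _ (hδp i).1.ne'
  have t1 : ∀ᶠ i in atTop, k * r i ≤ δ i / 2 := by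
    filter_upwards [hrδ.eventually_le_const (show (0:ℝ) < 1 / (2 * k) by positivity)] with i hi
    rw [div_le_div_iff₀ (hδp i).1 (by positivity)] at hi
    linarith
  have t2 : ∀ᶠ i in atTop, |A| * (k * r i) ^ s ≤ η := by
    have s0 : 0 < s := by linarith
    have h1 : Tendsto (fun i => |A| * (k * r i) ^ s) atTop (nhds (|A| * (k * 0) ^ s)) :=
      ((r0.const_mul k).rpow_const (Or.inr s0.le)).const_mul _
    rw [mul_zero, Real.zero_rpow s0.ne', mul_zero] at h1
    exact h1.eventually_le_const hη
  have t3 : ∀ᶠ i in atTop, ∫ y in ball (x_ i) (δ i / 2), V i y * Real.exp (u i y) ≤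
      8 * Real.pi * (1 + ε) := by
    refine hmass.eventually_le_const ?_
    have := Real.pi_pos
    nlinarith [mul_pos this hε]
  obtain ⟨i₀, hi₀⟩ := eventually_atTop.1 (t1.and (t2.and t3))
  refine ⟨i₀, fun i hi => ?_⟩
  obtain ⟨g1, g2, g3⟩ := hi₀ i hi
  rw [← hr i]
  obtain ⟨hd, hsub⟩ := hδp i
  obtain ⟨w, hw⟩ := rescale (hu i) (hVb i) (hpde i) (hint i) (hmax i) (hr i) hd hsub
  obtain ⟨c1, m1⟩ := hw k hk g1
  have k2 : 0 < δ i / 2 / r i := div_pos (by linarith) (rp i)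
  have k2r : δ i / 2 / r i * r i = δ i / 2 := div_mul_cancel₀ _ (rp i).ne'
  obtain ⟨c2, m2⟩ := hw (δ i / 2 / r i) k2 k2r.le
  rw [k2r] at m2 c2
  rw [← m1]
  constructor
  · refine H w (c1 η fun y hy => ?_)
    have hy1 : y ∈ ball (0:E2) 1 := hsub (ball_subset_ball (by linarith) hy)
    refine (hVhol i y hy1 _ (hxmem i)).trans (le_trans ?_ g2)
    rw [mem_ball, dist_eq_norm] at hy
    exact mul_le_mul (le_abs_self A)
      (Real.rpow_le_rpow (norm_nonneg _) hy.le (by linarith))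
      (Real.rpow_nonneg (norm_nonneg _) _) (abs_nonneg A)
  · refine le_trans ?_ g3
    rw [← m2]
    refine Ms_mono (c2 b fun y hy => ?_) ?_
    · have h1 := hVb i y (hsub (ball_subset_ball (by linarith) hy))
      have h2 := hVb i _ (hxmem i)
      rw [abs_le]; constructor <;> linarith
    · rw [le_div_iff₀ (rp i)]; exact g1
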